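/- arXiv:1010.5435 — 3 statements merged into one kernel-verified Lean document; each statement's English description precedes it below -/
import Mathlib

section
/- Let Ω ⊂ ℝⁿ be a closed axis-aligned box (so the divergence theorem applies on Ω), and let F[Φ] := ∫_Ω L(x, Φ(x), ∂Φ(x), …, ∂^NΦ(x)) dⁿx. Then for every smooth variation δΦ_B : ℝⁿ → ℝ, the Gateaux derivative d/dε|_{ε=0} F[Φ + ε δΦ] equals ∫_Ω Σ_{B=1}^{f} δΦ_B(x) E_B(x) dⁿx + ∫_{∂Ω} n_λ(x) Σ_{B=1}^{f} Σ_{Z=0}^{N−1} (∂_{ν₁}⋯∂_{ν_Z} δΦ_B)(x) K^{Bλν₁…ν_Z}(x) ds(x), where n is the outward unit normal on ∂Ω and ds the surface measure. -/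
open scoped BigOperators

/-- Index of a jet variable: derivative order `X ≤ N`, field index `B`,
and a multi-index of coordinate directions of length `X`. -/
abbrev JIdx (n f N : ℕ) : Type := Σ X : Fin (N + 1), Fin f × (Fin (X : ℕ) → Fin n)

/-- The (finite-dimensional) space of jet variables `q = (q^X_{B,λ₁…λ_X})`. -/
abbrev Jet (n f N : ℕ) : Type := JIdx n f N → ℝ

/-- Partial derivative in the `i`-th coordinate direction. -/
noncomputable def pd {n : ℕ} (i : Fin n) (F : (Fin n → ℝ) → ℝ) (x : Fin n → ℝ) : ℝ :=
  fderiv ℝ F x (Pi.single i 1)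

/-- Iterated partial derivative along a list of coordinate directions. -/
noncomputable def pds {n : ℕ} : List (Fin n) → ((Fin n → ℝ) → ℝ) → (Fin n → ℝ) → ℝ
  | [], F => F
  | i :: l, F => pd i (pds l F)

/-- The `N`-jet of the family of fields `Φ` at the point `x`:
the collection `(Φ_B(x), ∂Φ_B(x), …, ∂^N Φ_B(x))`. -/
noncomputable def jet {n f N : ℕ} (Φ : Fin f → (Fin n → ℝ) → ℝ) (x : Fin n → ℝ) :
    Jet n f N :=
  fun idx => pds (List.ofFn idx.2.2) (Φ idx.2.1) x

/-- `∂L/∂q_idx` evaluated along the jet of `Φ`. -/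
noncomputable def dLdq {n f N : ℕ} (L : (Fin n → ℝ) → Jet n f N → ℝ)
    (Φ : Fin f → (Fin n → ℝ) → ℝ) (idx : JIdx n f N) (x : Fin n → ℝ) : ℝ :=
  fderiv ℝ (L x) (jet Φ x) (Pi.single idx 1)

/-- The jet with the multi-index of the order-`X` variables permuted by `σ`. -/
def permJet {n f N : ℕ} (X : Fin (N + 1)) (σ : Equiv.Perm (Fin (X : ℕ)))
    (q : Jet n f N) : Jet n f N :=
  fun idx =>
    if h : idx.1 = X then
      q ⟨idx.1, idx.2.1, fun i =>
        idx.2.2 (Fin.cast (congrArg Fin.val h).symm (σ (Fin.cast (congrArg Fin.val h) i)))⟩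
    else q idx

/-- The Euler–Lagrange expression `E_B(x)`. -/
noncomputable def EulerLagrange {n f N : ℕ} (L : (Fin n → ℝ) → Jet n f N → ℝ)
    (Φ : Fin f → (Fin n → ℝ) → ℝ) (B : Fin f) (x : Fin n → ℝ) : ℝ :=
  ∑ X : Fin (N + 1), ∑ lam : Fin (X : ℕ) → Fin n,
    (-1 : ℝ) ^ (X : ℕ) * pds (List.ofFn lam) (dLdq L Φ ⟨X, B, lam⟩) x

/-- The coefficients `K^{Bλν₁…ν_Z}(x)` of the boundary/divergence term. -/
noncomputable def Kcur {n f N : ℕ} (L : (Fin n → ℝ) → Jet n f N → ℝ)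
    (Φ : Fin f → (Fin n → ℝ) → ℝ) (B : Fin f) (lam : Fin n) (Z : Fin N)
    (nu : Fin (Z : ℕ) → Fin n) (x : Fin n → ℝ) : ℝ :=
  ∑ Y : Fin (N - (Z : ℕ)), ∑ mu : Fin (Y : ℕ) → Fin n,
    (-1 : ℝ) ^ (Y : ℕ) *
      pds (List.ofFn mu)
        (dLdq L Φ
          ⟨⟨1 + (Y : ℕ) + (Z : ℕ), by have h1 := Y.isLt; have h2 := Z.isLt; omega⟩, B,
            Fin.append (Fin.append (fun _ : Fin 1 => lam) mu) nu⟩) x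


section helpers

open Finset

local notation "Smooth" F => ContDiff ℝ ((⊤ : ℕ∞) : WithTop ℕ∞) F

theorem aux_smooth_pd {n : ℕ} (i : Fin n) {F : (Fin n → ℝ) → ℝ} (hF : Smooth F) :
    Smooth (pd i F) := by
  unfold pd
  exact (hF.fderiv_right (m := ((⊤ : ℕ∞) : WithTop ℕ∞)) le_rfl).clm_apply contDiff_const

theorem aux_smooth_pds {n : ℕ} (l : List (Fin n)) {F : (Fin n → ℝ) → ℝ} (hF : Smooth F) :
    Smooth (pds l F) := by
  induction l with
  | nil => exact hF
  | cons i l ih => exact aux_smooth_pd i ih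

theorem aux_diff {E : Type*} [NormedAddCommGroup E] [NormedSpace ℝ E] {F : E → ℝ}
    (hF : Smooth F) (x : E) : DifferentiableAt ℝ F x :=
  (hF.differentiable (by simp)) x

theorem aux_pd_comm {n : ℕ} (i j : Fin n) {F : (Fin n → ℝ) → ℝ} (hF : Smooth F) :
    pd i (pd j F) = pd j (pd i F) := by
  funext x
  have hd : DifferentiableAt ℝ (fderiv ℝ F) x :=
    ((hF.fderiv_right (m := ((⊤ : ℕ∞) : WithTop ℕ∞)) le_rfl).differentiable (by simp)) x
  have key : ∀ k l : Fin n, pd k (pd l F) x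
      = fderiv ℝ (fderiv ℝ F) x (Pi.single k 1) (Pi.single l 1) := by
    intro k l
    unfold pd
    rw [fderiv_clm_apply hd (differentiableAt_const _)]
    simp
  rw [key, key]
  exact (hF.contDiffAt.isSymmSndFDerivAt (by
    simpa using (WithTop.coe_le_coe.2 (le_top : (2 : ℕ∞) ≤ ⊤)))) _ _

theorem aux_pds_perm {n : ℕ} {l l' : List (Fin n)} (h : l.Perm l') {F : (Fin n → ℝ) → ℝ}
    (hF : Smooth F) : pds l F = pds l' F := by
  induction h with
  | nil => rfl
  | cons i _ ih => simp only [pds, ih]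
  | swap i j l => exact aux_pd_comm _ _ (aux_smooth_pds l hF)
  | trans _ _ h1 h2 => exact h1.trans h2

theorem aux_pd_mul {n : ℕ} (i : Fin n) {F G : (Fin n → ℝ) → ℝ} (hF : Smooth F) (hG : Smooth G)
    (x : Fin n → ℝ) :
    pd i (fun y => F y * G y) x = pd i F x * G x + F x * pd i G x := by
  unfold pd
  rw [fderiv_fun_mul (aux_diff hF x) (aux_diff hG x)]
  simp; ring

theorem aux_pd_add {n : ℕ} (i : Fin n) {F G : (Fin n → ℝ) → ℝ} (hF : Smooth F) (hG : Smooth G) :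
    pd i (fun y => F y + G y) = fun x => pd i F x + pd i G x := by
  funext x
  unfold pd
  rw [fderiv_fun_add (aux_diff hF x) (aux_diff hG x)]
  simp

theorem aux_pd_const_mul {n : ℕ} (i : Fin n) (c : ℝ) {F : (Fin n → ℝ) → ℝ} (hF : Smooth F) :
    pd i (fun y => c * F y) = fun x => c * pd i F x := by
  funext x
  unfold pd
  rw [fderiv_const_mul (aux_diff hF x)]
  simp

theorem aux_pd_sum {n : ℕ} {ι : Type*} (s : Finset ι) (i : Fin n) {F : ι → (Fin n → ℝ) → ℝ}
    (hF : ∀ j, Smooth (F j)) (x : Fin n → ℝ) :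
    pd i (fun y => ∑ j ∈ s, F j y) x = ∑ j ∈ s, pd i (F j) x := by
  unfold pd
  rw [fderiv_fun_sum (fun j _ => aux_diff (hF j) x)]
  simp

theorem aux_pds_lin {n : ℕ} (l : List (Fin n)) (c : ℝ) {F G : (Fin n → ℝ) → ℝ} (hF : Smooth F)
    (hG : Smooth G) :
    pds l (fun y => F y + c * G y) = fun x => pds l F x + c * pds l G x := by
  induction l with
  | nil => rfl
  | cons i l ih =>
    simp only [pds, ih]
    rw [aux_pd_add i (aux_smooth_pds l hF) (contDiff_const.mul (aux_smooth_pds l hG)),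
      aux_pd_const_mul i c (aux_smooth_pds l hG)]

theorem aux_jet_lin {n f N : ℕ} (Φ δ : Fin f → (Fin n → ℝ) → ℝ) (hΦ : ∀ B, Smooth (Φ B))
    (hδ : ∀ B, Smooth (δ B)) (ε : ℝ) (x : Fin n → ℝ) :
    (jet (fun B x' => Φ B x' + ε * δ B x') x : Jet n f N) = jet Φ x + ε • jet δ x := by
  funext idx
  simp only [jet, Pi.add_apply, Pi.smul_apply, smul_eq_mul]
  rw [aux_pds_lin _ ε (hΦ _) (hδ _)]

theorem aux_smooth_jet {n f N : ℕ} (Φ : Fin f → (Fin n → ℝ) → ℝ) (hΦ : ∀ B, Smooth (Φ B)) :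
    Smooth (fun x => (jet Φ x : Jet n f N)) := by
  rw [contDiff_pi]
  intro idx
  exact aux_smooth_pds _ (hΦ _)

theorem aux_smooth_dLdq {n f N : ℕ} (L : (Fin n → ℝ) → Jet n f N → ℝ)
    (hL : Smooth (fun p : (Fin n → ℝ) × Jet n f N => L p.1 p.2))
    (Φ : Fin f → (Fin n → ℝ) → ℝ) (hΦ : ∀ B, Smooth (Φ B)) (idx : JIdx n f N) :
    Smooth (dLdq L Φ idx) := by
  unfold dLdq
  exact (ContDiff.fderiv (f := L) (m := ((⊤ : ℕ∞) : WithTop ℕ∞)) hL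
    (aux_smooth_jet Φ hΦ) le_rfl).clm_apply contDiff_const

theorem aux_exists_perm {n k : ℕ} (u v : Fin k → Fin n) (h : (List.ofFn u).Perm (List.ofFn v)) :
    ∃ σ : Equiv.Perm (Fin k), u = v ∘ σ := by
  have hu := Tuple.monotone_sort u
  have hv := Tuple.monotone_sort v
  have h1 : (List.ofFn (u ∘ Tuple.sort u)).Perm (List.ofFn (v ∘ Tuple.sort v)) :=
    ((Equiv.Perm.ofFn_comp_perm _ u).trans h).trans (Equiv.Perm.ofFn_comp_perm _ v).symm
  have h2 := List.ofFn_injective (h1.eq_of_sortedLE hu.sortedLE_ofFn hv.sortedLE_ofFn)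
  refine ⟨(Tuple.sort u).symm.trans (Tuple.sort v), ?_⟩
  funext i
  have := congrFun h2 ((Tuple.sort u).symm i)
  simpa using this

def permJetLin {n f N : ℕ} (X : Fin (N + 1)) (σ : Equiv.Perm (Fin (X : ℕ))) :
    Jet n f N →ₗ[ℝ] Jet n f N where
  toFun := permJet X σ
  map_add' p q := by
    funext idx
    simp only [permJet, Pi.add_apply]
    split_ifs <;> rfl
  map_smul' c q := by
    funext idx
    simp only [permJet, Pi.smul_apply]
    split_ifs <;> rfl

theorem aux_permJet_jet {n f N : ℕ} (Φ : Fin f → (Fin n → ℝ) → ℝ) (hΦ : ∀ B, Smooth (Φ B))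
    (X : Fin (N + 1)) (σ : Equiv.Perm (Fin (X : ℕ))) (x : Fin n → ℝ) :
    permJet X σ (jet Φ x : Jet n f N) = jet Φ x := by
  funext ⟨Y, B, mu⟩
  unfold permJet
  split_ifs with h
  · obtain rfl : Y = X := h
    exact congrFun (aux_pds_perm (Equiv.Perm.ofFn_comp_perm σ mu) (hΦ B)) x
  · rfl

theorem aux_permJet_single {n f N : ℕ} (X : Fin (N + 1)) (σ : Equiv.Perm (Fin (X : ℕ)))
    (B : Fin f) (lam : Fin (X : ℕ) → Fin n) :
    permJet X σ (Pi.single (⟨X, B, lam ∘ σ⟩ : JIdx n f N) (1 : ℝ) : Jet n f N)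
      = Pi.single ⟨X, B, lam⟩ 1 := by
  funext ⟨Y, B', mu⟩
  unfold permJet
  split_ifs with h
  · obtain rfl : Y = X := h
    simp only [Pi.single_apply]
    congr 1
    simp only [Sigma.mk.injEq, heq_eq_eq, true_and, Prod.mk.injEq, eq_iff_iff]
    refine and_congr_right fun _ => ⟨fun h => ?_, fun h => ?_⟩
    · funext i
      have := congrFun h (σ.symm i)
      simpa using this
    · subst h; rfl
  · have h1 : (⟨Y, B', mu⟩ : JIdx n f N) ≠ ⟨X, B, lam ∘ σ⟩ := fun e => h (congrArg Sigma.fst e)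
    have h2 : (⟨Y, B', mu⟩ : JIdx n f N) ≠ ⟨X, B, lam⟩ := fun e => h (congrArg Sigma.fst e)
    rw [Pi.single_eq_of_ne h1, Pi.single_eq_of_ne h2]

theorem aux_dLdq_perm {n f N : ℕ} (L : (Fin n → ℝ) → Jet n f N → ℝ)
    (hL : Smooth (fun p : (Fin n → ℝ) × Jet n f N => L p.1 p.2))
    (hLsymm : ∀ (x : Fin n → ℝ) (q : Jet n f N) (X : Fin (N + 1))
      (σ : Equiv.Perm (Fin (X : ℕ))), L x (permJet X σ q) = L x q)
    (Φ : Fin f → (Fin n → ℝ) → ℝ) (hΦ : ∀ B, Smooth (Φ B)) (X : Fin (N + 1)) (B : Fin f)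
    (lam mu : Fin (X : ℕ) → Fin n) (h : (List.ofFn lam).Perm (List.ofFn mu)) :
    dLdq L Φ ⟨X, B, lam⟩ = dLdq L Φ ⟨X, B, mu⟩ := by
  obtain ⟨σ, rfl⟩ := aux_exists_perm lam mu h
  funext x
  unfold dLdq
  have hLx : Smooth (L x) := hL.comp (contDiff_const.prodMk contDiff_id)
  set P : Jet n f N →L[ℝ] Jet n f N := (permJetLin X σ).toContinuousLinearMap with hP
  have hPa : ∀ q, P q = permJet X σ q := fun q => rfl
  have e : L x ∘ P = L x := by
    funext q
    exact hLsymm x q X σ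
  have h1 : fderiv ℝ (L x ∘ P) (jet Φ x) = (fderiv ℝ (L x) (P (jet Φ x))).comp P := by
    rw [fderiv_comp _ (aux_diff hLx _) P.differentiableAt, P.fderiv]
  rw [e, hPa, aux_permJet_jet Φ hΦ] at h1
  conv_lhs => rw [h1]
  rw [ContinuousLinearMap.comp_apply, hPa, aux_permJet_single]

/-- Sum over all multi-indices of length `k`. -/
def SL {n : ℕ} (k : ℕ) (g : List (Fin n) → ℝ) : ℝ := ∑ lam : Fin k → Fin n, g (List.ofFn lam)

theorem SL_zero {n : ℕ} (g : List (Fin n) → ℝ) : SL 0 g = g [] := by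
  simp [SL]

theorem SL_succ {n : ℕ} (k : ℕ) (g : List (Fin n) → ℝ) :
    SL (k + 1) g = ∑ i, SL k (fun l => g (i :: l)) := by
  unfold SL
  rw [← (Fin.consEquiv (fun _ => Fin n)).sum_comp, Fintype.sum_prod_type]
  simp [Fin.consEquiv]

theorem aux_tele (G : ℕ → ℕ → ℝ) (N : ℕ) :
    ∑ Z ∈ range N, ∑ Y ∈ range (N - Z), (G Y (Z + 1) - G (Y + 1) Z)
      = ∑ X ∈ range (N + 1), G 0 X - ∑ X ∈ range (N + 1), G X 0 := by
  induction N with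
  | zero => simp
  | succ N ih =>
    have h1 : ∑ Z ∈ range (N + 1), ∑ Y ∈ range (N + 1 - Z), (G Y (Z + 1) - G (Y + 1) Z)
        = ∑ Z ∈ range (N + 1), ∑ Y ∈ range (N - Z), (G Y (Z + 1) - G (Y + 1) Z)
          + ∑ Z ∈ range (N + 1), (G (N + 1 - (Z + 1)) (Z + 1) - G (N + 1 - Z) Z) := by
      rw [← sum_add_distrib]
      refine sum_congr rfl fun Z hZ => ?_
      have : Z ≤ N := by simpa [Nat.lt_succ_iff] using hZ
      rw [Nat.succ_sub this, sum_range_succ]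
      simp
    rw [h1, sum_range_succ _ N, ih, sum_range_sub (fun Z => G (N + 1 - Z) Z),
      sum_range_succ _ (N + 1), sum_range_succ _ (N + 1)]
    simp
    ring

/-- The coefficients `∂L/∂q` indexed by lists. -/
noncomputable def PL {n f N : ℕ} (L : (Fin n → ℝ) → Jet n f N → ℝ)
    (Φ : Fin f → (Fin n → ℝ) → ℝ) (B : Fin f) (l : List (Fin n)) : (Fin n → ℝ) → ℝ :=
  if h : l.length < N + 1 then dLdq L Φ ⟨⟨l.length, h⟩, B, l.get⟩ else fun _ => 0

theorem PL_ofFn {n f N : ℕ} (L : (Fin n → ℝ) → Jet n f N → ℝ)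
    (Φ : Fin f → (Fin n → ℝ) → ℝ) (B : Fin f) (X : Fin (N + 1)) (lam : Fin (X : ℕ) → Fin n)
    (l : List (Fin n)) (hl : List.ofFn lam = l) :
    dLdq L Φ ⟨X, B, lam⟩ = PL L Φ B l := by
  obtain ⟨k, hk⟩ := X
  have hlen : l.length = k := by rw [← hl]; simp
  subst hlen
  have : lam = l.get := by
    apply List.ofFn_injective
    rw [hl, List.ofFn_get]
  subst this
  unfold PL
  rw [dif_pos hk]

theorem PL_smooth {n f N : ℕ} (L : (Fin n → ℝ) → Jet n f N → ℝ)
    (hL : Smooth (fun p : (Fin n → ℝ) × Jet n f N => L p.1 p.2))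
    (Φ : Fin f → (Fin n → ℝ) → ℝ) (hΦ : ∀ B, Smooth (Φ B)) (B : Fin f) (l : List (Fin n)) :
    Smooth (PL L Φ B l) := by
  unfold PL
  split_ifs
  · exact aux_smooth_dLdq L hL Φ hΦ _
  · exact contDiff_const

theorem PL_perm {n f N : ℕ} (L : (Fin n → ℝ) → Jet n f N → ℝ)
    (hL : Smooth (fun p : (Fin n → ℝ) × Jet n f N => L p.1 p.2))
    (hLsymm : ∀ (x : Fin n → ℝ) (q : Jet n f N) (X : Fin (N + 1))
      (σ : Equiv.Perm (Fin (X : ℕ))), L x (permJet X σ q) = L x q)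
    (Φ : Fin f → (Fin n → ℝ) → ℝ) (hΦ : ∀ B, Smooth (Φ B)) (B : Fin f)
    (l l' : List (Fin n)) (h : l.Perm l') : PL L Φ B l = PL L Φ B l' := by
  have hlen := h.length_eq
  by_cases hk : l.length < N + 1
  · have ex : ∀ (k : ℕ) (m : List (Fin n)), m.length = k → ∃ lam : Fin k → Fin n,
        List.ofFn lam = m := by
      rintro k m rfl
      exact ⟨m.get, List.ofFn_get m⟩
    obtain ⟨u, hu⟩ := ex l.length l rfl
    obtain ⟨v, hv⟩ := ex l.length l' hlen.symm
    rw [← PL_ofFn L Φ B ⟨l.length, hk⟩ u l hu, ← PL_ofFn L Φ B ⟨l.length, hk⟩ v l' hv]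
    apply aux_dLdq_perm L hL hLsymm Φ hΦ
    rw [hu, hv]
    exact h
  · unfold PL
    rw [dif_neg hk, dif_neg (hlen ▸ hk)]

noncomputable def KF {n : ℕ} (N : ℕ) (P : List (Fin n) → (Fin n → ℝ) → ℝ) (i : Fin n) (Z : ℕ)
    (v : List (Fin n)) (x : Fin n → ℝ) : ℝ :=
  ∑ Y ∈ range (N - Z), (-1 : ℝ) ^ Y * SL Y (fun m => pds m (P (i :: m ++ v)) x)

theorem SL_smooth {n : ℕ} (k : ℕ) (g : List (Fin n) → (Fin n → ℝ) → ℝ) (hg : ∀ l, Smooth (g l)) :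
    Smooth (fun x => SL k (fun l => g l x)) := by
  unfold SL
  exact ContDiff.sum fun _ _ => hg _

theorem SL_pd {n : ℕ} (k : ℕ) (g : List (Fin n) → (Fin n → ℝ) → ℝ) (hg : ∀ l, Smooth (g l))
    (i : Fin n) (x : Fin n → ℝ) :
    pd i (fun x => SL k (fun l => g l x)) x = SL k (fun l => pd i (g l) x) := by
  unfold SL
  exact aux_pd_sum _ i (fun _ => hg _) x

theorem KF_smooth {n : ℕ} (N : ℕ) (P : List (Fin n) → (Fin n → ℝ) → ℝ) (hP : ∀ l, Smooth (P l))
    (i : Fin n) (Z : ℕ) (v : List (Fin n)) : Smooth (KF N P i Z v) := by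
  unfold KF
  exact ContDiff.sum fun Y _ => contDiff_const.mul
    (SL_smooth Y (fun m => pds m (P (i :: m ++ v))) fun m => aux_smooth_pds _ (hP _))

theorem KF_pd {n : ℕ} (N : ℕ) (P : List (Fin n) → (Fin n → ℝ) → ℝ) (hP : ∀ l, Smooth (P l))
    (i : Fin n) (Z : ℕ) (v : List (Fin n)) (x : Fin n → ℝ) :
    pd i (KF N P i Z v) x = ∑ Y ∈ range (N - Z), (-1 : ℝ) ^ Y *
      SL Y (fun m => pds (i :: m) (P (i :: m ++ v)) x) := by
  have hs : ∀ Y, Smooth (fun x => SL Y (fun m => pds m (P (i :: m ++ v)) x)) := fun Y =>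
    SL_smooth Y (fun m => pds m (P (i :: m ++ v))) fun m => aux_smooth_pds _ (hP _)
  unfold KF
  rw [aux_pd_sum (F := fun Y x => (-1 : ℝ) ^ Y * SL Y (fun m => pds m (P (i :: m ++ v)) x)) _ i
    (fun Y => contDiff_const.mul (hs Y)) x]
  refine sum_congr rfl fun Y _ => ?_
  rw [aux_pd_const_mul i _ (hs Y)]
  simp only []
  rw [SL_pd Y (fun m => pds m (P (i :: m ++ v))) (fun m => aux_smooth_pds _ (hP _))]
  rfl

theorem aux_div {n : ℕ} (N : ℕ) (P : List (Fin n) → (Fin n → ℝ) → ℝ) (hP : ∀ l, Smooth (P l))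
    (hperm : ∀ l l' : List (Fin n), l.Perm l' → P l = P l') (δ : (Fin n → ℝ) → ℝ) (hδ : Smooth δ)
    (x : Fin n → ℝ) :
    ∑ i, pd i (fun y => ∑ Z ∈ range N, SL Z (fun v => pds v δ y * KF N P i Z v y)) x
      = ∑ X ∈ range (N + 1), SL X (fun v => P v x * pds v δ x)
        - ∑ X ∈ range (N + 1), ((-1 : ℝ) ^ X * SL X (fun m => pds m (P m) x)) * δ x := by
  set G : ℕ → ℕ → ℝ := fun Y Z => (-1 : ℝ) ^ Y * SL Y (fun m => SL Z (fun v =>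
    pds m (P (m ++ v)) x * pds v δ x)) with hG
  have e1 : ∀ X, G 0 X = SL X (fun v => P v x * pds v δ x) := by
    intro X
    simp [hG, SL_zero, pds]
  have e2 : ∀ X, G X 0 = ((-1 : ℝ) ^ X * SL X (fun m => pds m (P m) x)) * δ x := by
    intro X
    simp only [hG, SL_zero, pds, List.append_nil]
    rw [mul_assoc]
    congr 1
    unfold SL
    rw [sum_mul]
  have e3 : ∀ Y Z, G Y (Z + 1) = ∑ i, SL Z (fun v => pd i (pds v δ) x *
      ((-1 : ℝ) ^ Y * SL Y (fun m => pds m (P (i :: m ++ v)) x))) := by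
    intro Y Z
    simp only [hG, SL_succ]
    unfold SL
    simp only [mul_sum]
    rw [sum_comm]
    refine sum_congr rfl fun i _ => ?_
    rw [sum_comm]
    refine sum_congr rfl fun v _ => ?_
    refine sum_congr rfl fun m _ => ?_
    rw [hperm (List.ofFn m ++ i :: List.ofFn v) (i :: List.ofFn m ++ List.ofFn v)
      List.perm_middle]
    simp only [pds]
    ring
  have e4 : ∀ Y Z, - G (Y + 1) Z = ∑ i, SL Z (fun v => pds v δ x *
      ((-1 : ℝ) ^ Y * SL Y (fun m => pds (i :: m) (P (i :: m ++ v)) x))) := by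
    intro Y Z
    simp only [hG, SL_succ Y]
    unfold SL
    simp only [mul_sum]
    rw [← sum_neg_distrib]
    refine sum_congr rfl fun i _ => ?_
    rw [sum_comm, ← sum_neg_distrib]
    refine sum_congr rfl fun v _ => ?_
    rw [← sum_neg_distrib]
    refine sum_congr rfl fun m _ => ?_
    rw [pow_succ]
    ring
  simp only [← e1, ← e2]
  rw [← aux_tele]
  have hprod : ∀ i Z v, Smooth (fun y => pds v δ y * KF N P i Z v y) := fun i Z v =>
    (aux_smooth_pds v hδ).mul (KF_smooth N P hP i Z v)
  have step : ∀ i, pd i (fun y => ∑ Z ∈ range N, SL Z (fun v => pds v δ y * KF N P i Z v y)) x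
      = ∑ Z ∈ range N, ∑ Y ∈ range (N - Z),
        (SL Z (fun v => pd i (pds v δ) x *
          ((-1 : ℝ) ^ Y * SL Y (fun m => pds m (P (i :: m ++ v)) x)))
        + SL Z (fun v => pds v δ x *
          ((-1 : ℝ) ^ Y * SL Y (fun m => pds (i :: m) (P (i :: m ++ v)) x)))) := by
    intro i
    rw [aux_pd_sum (F := fun Z y => SL Z (fun v => pds v δ y * KF N P i Z v y)) _ i
      (fun Z => SL_smooth Z (fun v y => pds v δ y * KF N P i Z v y) (hprod i Z)) x]
    refine sum_congr rfl fun Z _ => ?_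
    rw [SL_pd Z (fun v y => pds v δ y * KF N P i Z v y) (hprod i Z)]
    simp only [aux_pd_mul i (aux_smooth_pds _ hδ) (KF_smooth N P hP i Z _), KF_pd N P hP]
    unfold KF
    rw [sum_add_distrib]
    conv_lhs => unfold SL
    rw [sum_add_distrib]
    congr 1
    · simp only [mul_sum]
      rw [sum_comm]
      simp only [SL, mul_sum]
    · simp only [mul_sum]
      rw [sum_comm]
      simp only [SL, mul_sum]
  simp only [step]
  rw [sum_comm]
  refine sum_congr rfl fun Z _ => ?_
  rw [sum_comm]
  refine sum_congr rfl fun Y _ => ?_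
  rw [sum_add_distrib, ← e3, ← e4, sub_eq_add_neg]

theorem aux_EL {n f N : ℕ} (L : (Fin n → ℝ) → Jet n f N → ℝ)
    (Φ : Fin f → (Fin n → ℝ) → ℝ) (B : Fin f) (x : Fin n → ℝ) :
    EulerLagrange L Φ B x
      = ∑ X ∈ range (N + 1), (-1 : ℝ) ^ X * SL X (fun m => pds m (PL L Φ B m) x) := by
  unfold EulerLagrange SL
  rw [Finset.sum_range]
  refine sum_congr rfl fun X _ => ?_
  rw [mul_sum]
  refine sum_congr rfl fun lam _ => ?_
  rw [PL_ofFn L Φ B X lam _ rfl]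

theorem aux_K {n f N : ℕ} (L : (Fin n → ℝ) → Jet n f N → ℝ)
    (Φ : Fin f → (Fin n → ℝ) → ℝ) (B : Fin f) (i : Fin n) (Z : Fin N)
    (nu : Fin (Z : ℕ) → Fin n) (x : Fin n → ℝ) :
    Kcur L Φ B i Z nu x = KF N (PL L Φ B) i Z (List.ofFn nu) x := by
  unfold Kcur KF SL
  rw [Finset.sum_range]
  refine sum_congr rfl fun Y _ => ?_
  rw [mul_sum]
  refine sum_congr rfl fun mu _ => ?_
  rw [PL_ofFn L Φ B _ _ (i :: List.ofFn mu ++ List.ofFn nu)]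
  rw [List.ofFn_fin_append, List.ofFn_fin_append]
  simp

theorem aux_dL {n f N : ℕ} (L : (Fin n → ℝ) → Jet n f N → ℝ)
    (Φ δ : Fin f → (Fin n → ℝ) → ℝ) (x : Fin n → ℝ) :
    fderiv ℝ (L x) (jet Φ x) (jet δ x)
      = ∑ B, ∑ X ∈ range (N + 1), SL X (fun v => PL L Φ B v x * pds v (δ B) x) := by
  have h : (jet δ x : Jet n f N) = ∑ idx, jet δ x idx • (Pi.single idx (1 : ℝ) : Jet n f N) := by
    conv_lhs => rw [← Finset.univ_sum_single (jet δ x : Jet n f N)]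
    refine sum_congr rfl fun idx _ => ?_
    rw [← Pi.single_smul]
    simp
  rw [h, map_sum, Fintype.sum_sigma]
  simp only [Fintype.sum_prod_type]
  rw [sum_comm]
  refine sum_congr rfl fun B _ => ?_
  rw [Finset.sum_range]
  refine sum_congr rfl fun X _ => ?_
  unfold SL
  refine sum_congr rfl fun lam _ => ?_
  simp only []
  rw [← PL_ofFn L Φ B X lam _ rfl, map_smul]
  simp only [jet, dLdq, smul_eq_mul]
  ring

open MeasureTheory in
theorem aux_deriv_int {E : Type*} [NormedAddCommGroup E] [MeasurableSpace E] [BorelSpace E]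
    [SecondCountableTopology E]
    (μ : Measure E) [IsFiniteMeasureOnCompacts μ] (K : Set E) (hK : IsCompact K)
    (F F' : ℝ → E → ℝ) (hF : ∀ ε, Continuous (F ε)) (hF' : Continuous (fun p : ℝ × E => F' p.1 p.2))
    (hd : ∀ ε x, HasDerivAt (fun e => F e x) (F' ε x) ε) :
    deriv (fun ε => ∫ x in K, F ε x ∂μ) 0 = ∫ x in K, F' 0 x ∂μ := by
  obtain ⟨C, hC⟩ := ((isCompact_Icc (a := (-1 : ℝ)) (b := 1)).prod hK).exists_bound_of_continuousOn
    hF'.continuousOn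
  have hKm : MeasurableSet K := hK.measurableSet
  refine (hasDerivAt_integral_of_dominated_loc_of_deriv_le (bound := fun _ => C)
    (Icc_mem_nhds (by norm_num : (-1 : ℝ) < 0) (by norm_num : (0 : ℝ) < 1))
    (Filter.Eventually.of_forall fun ε => (hF ε).aestronglyMeasurable)
    ((hF 0).continuousOn.integrableOn_compact hK) ?_ ?_ ?_ ?_).2.deriv
  · exact (hF'.comp (by fun_prop : Continuous fun x : E => ((0 : ℝ), x))).aestronglyMeasurable
  · refine (ae_restrict_iff' hKm).2 (Filter.Eventually.of_forall fun x hx ε hε => ?_)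
    exact hC (ε, x) ⟨hε, hx⟩
  · exact continuousOn_const.integrableOn_compact hK
  · exact Filter.Eventually.of_forall fun x ε _ => hd ε x

end helpers
/-- equation (3)/(7) of the paper: for a closed axis-aligned box
`Ω = Icc a b ⊂ ℝⁿ` (`n = d+1 ≥ 2`), the Gateaux derivative of the action
`F[Φ] = ∫_Ω L(x, jet Φ(x)) dx` in the direction of a smooth variation `δΦ`
equals the integral of the Euler–Lagrange expression contracted with `δΦ`
plus the boundary (outward-flux) term over `∂Ω`, the latter written as the sum
over the `2(d+1)` faces of the box. -/
theorem gateaux_derivative_of_action {d f N : ℕ} (hd : 1 ≤ d) (hf : 1 ≤ f) (hN : 1 ≤ N)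
    (L : (Fin (d + 1) → ℝ) → Jet (d + 1) f N → ℝ)
    (hL : ContDiff ℝ (⊤ : ℕ∞) (fun p : (Fin (d + 1) → ℝ) × Jet (d + 1) f N => L p.1 p.2))
    (hLsymm : ∀ (x : Fin (d + 1) → ℝ) (q : Jet (d + 1) f N) (X : Fin (N + 1))
      (σ : Equiv.Perm (Fin (X : ℕ))), L x (permJet X σ q) = L x q)
    (Φ δΦ : Fin f → (Fin (d + 1) → ℝ) → ℝ)
    (hΦ : ∀ B, ContDiff ℝ (⊤ : ℕ∞) (Φ B)) (hδΦ : ∀ B, ContDiff ℝ (⊤ : ℕ∞) (δΦ B))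
    (a b : Fin (d + 1) → ℝ) (hab : a ≤ b) :
    deriv (fun ε : ℝ =>
        ∫ x in Set.Icc a b, L x (jet (fun B x' => Φ B x' + ε * δΦ B x') x)) 0
      = (∫ x in Set.Icc a b, ∑ B : Fin f, δΦ B x * EulerLagrange L Φ B x)
        + ∑ i : Fin (d + 1),
            ((∫ x' in Set.Icc (a ∘ i.succAbove) (b ∘ i.succAbove),
                ∑ B : Fin f, ∑ Z : Fin N, ∑ nu : Fin (Z : ℕ) → Fin (d + 1),
                  pds (List.ofFn nu) (δΦ B) (i.insertNth (b i) x')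
                    * Kcur L Φ B i Z nu (i.insertNth (b i) x'))
             - (∫ x' in Set.Icc (a ∘ i.succAbove) (b ∘ i.succAbove),
                ∑ B : Fin f, ∑ Z : Fin N, ∑ nu : Fin (Z : ℕ) → Fin (d + 1),
                  pds (List.ofFn nu) (δΦ B) (i.insertNth (a i) x')
                    * Kcur L Φ B i Z nu (i.insertNth (a i) x'))) := by
  classical
  have sv : ContDiff ℝ (⊤ : ℕ∞) (fun x => (jet δΦ x : Jet (d + 1) f N)) := aux_smooth_jet δΦ hδΦ
  have sq : ContDiff ℝ (⊤ : ℕ∞) (fun x => (jet Φ x : Jet (d + 1) f N)) := aux_smooth_jet Φ hΦ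
  have hLx : ∀ x, ContDiff ℝ (⊤ : ℕ∞) (L x) := fun x =>
    hL.comp (contDiff_const.prodMk contDiff_id)
  simp only [aux_jet_lin Φ δΦ hΦ hδΦ]
  rw [aux_deriv_int MeasureTheory.volume (Set.Icc a b) isCompact_Icc
    (fun ε x => L x (jet Φ x + ε • jet δΦ x))
    (fun ε x => fderiv ℝ (L x) (jet Φ x + ε • jet δΦ x) (jet δΦ x))]
  rotate_left
  · intro ε
    exact hL.continuous.comp (continuous_id.prodMk
      (sq.continuous.add (sv.continuous.const_smul ε)))
  · have h2 : ContDiff ℝ (⊤ : ℕ∞) (fun p : ℝ × (Fin (d + 1) → ℝ) =>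
        (jet Φ p.2 + p.1 • jet δΦ p.2 : Jet (d + 1) f N)) :=
      (sq.comp contDiff_snd).add (contDiff_fst.smul (sv.comp contDiff_snd))
    have h1 : ContDiff ℝ (⊤ : ℕ∞) (fun p : ℝ × (Fin (d + 1) → ℝ) =>
        fderiv ℝ (L p.2) (jet Φ p.2 + p.1 • jet δΦ p.2)) := by
      refine ContDiff.fderiv (f := fun p : ℝ × (Fin (d + 1) → ℝ) => L p.2)
        (m := ((⊤ : ℕ∞) : WithTop ℕ∞)) ?_ h2 le_rfl
      exact hL.comp ((contDiff_snd.comp contDiff_fst).prodMk contDiff_snd)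
    exact (h1.clm_apply (sv.comp contDiff_snd)).continuous
  · intro ε x
    have h1 : HasDerivAt (fun e : ℝ => (jet Φ x + e • jet δΦ x : Jet (d + 1) f N)) (jet δΦ x) ε := by
      simpa using ((hasDerivAt_id ε).smul_const (jet δΦ x : Jet (d + 1) f N)).const_add
        (jet Φ x : Jet (d + 1) f N)
    exact (aux_diff (hLx x) _).hasFDerivAt.comp_hasDerivAt ε h1
  simp only [zero_smul, add_zero, aux_dL]
  set J : Fin (d + 1) → (Fin (d + 1) → ℝ) → ℝ := fun i y => ∑ B : Fin f,
    ∑ Z ∈ Finset.range N, SL Z (fun v => pds v (δΦ B) y * KF N (PL L Φ B) i Z v y) with hJ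
  have hPs := fun B => PL_smooth L hL Φ hΦ B
  have hJB : ∀ i B, ContDiff ℝ (⊤ : ℕ∞) (fun y => ∑ Z ∈ Finset.range N,
      SL Z (fun v => pds v (δΦ B) y * KF N (PL L Φ B) i Z v y)) := fun i B =>
    ContDiff.sum fun Z _ => SL_smooth Z (fun v y => pds v (δΦ B) y * KF N (PL L Φ B) i Z v y)
      fun v => (aux_smooth_pds v (hδΦ B)).mul (KF_smooth N _ (hPs B) i Z v)
  have hJs : ∀ i, ContDiff ℝ (⊤ : ℕ∞) (J i) := fun i => ContDiff.sum fun B _ => hJB i B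
  have hJeq : ∀ i y, (∑ B : Fin f, ∑ Z : Fin N, ∑ nu : Fin (Z : ℕ) → Fin (d + 1),
      pds (List.ofFn nu) (δΦ B) y * Kcur L Φ B i Z nu y) = J i y := by
    intro i y
    simp only [hJ, aux_K, Finset.sum_range]
    rfl
  simp only [hJeq]
  have hdivc : Continuous (fun x => ∑ i, pd i (J i) x) :=
    continuous_finsetSum _ fun i _ => (aux_smooth_pd i (hJs i)).continuous
  have hELc : Continuous (fun x => ∑ B : Fin f, δΦ B x * EulerLagrange L Φ B x) := by
    refine continuous_finsetSum _ fun B _ => (hδΦ B).continuous.mul ?_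
    unfold EulerLagrange
    exact continuous_finsetSum _ fun X _ => continuous_finsetSum _ fun lam _ =>
      continuous_const.mul (aux_smooth_pds _ (aux_smooth_dLdq L hL Φ hΦ _)).continuous
  have hdiv := MeasureTheory.integral_divergence_of_hasFDerivAt_off_countable' a b hab J
    (fun i x => fderiv ℝ (J i) x) ∅ Set.countable_empty (fun i => (hJs i).continuous.continuousOn)
    (fun x _ i => (aux_diff (hJs i) x).hasFDerivAt)
    (hdivc.continuousOn.integrableOn_compact isCompact_Icc)
  rw [← hdiv]
  change _ = _ + ∫ x in Set.Icc a b, ∑ i, pd i (J i) x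
  rw [← MeasureTheory.integral_add
    (hELc.continuousOn.integrableOn_compact isCompact_Icc)
    (hdivc.continuousOn.integrableOn_compact isCompact_Icc)]
  congr 1
  funext x
  change _ = _ + ∑ i, pd i (J i) x
  have : ∑ i, pd i (J i) x = ∑ B : Fin f,
      (∑ X ∈ Finset.range (N + 1), SL X (fun v => PL L Φ B v x * pds v (δΦ B) x)
        - δΦ B x * EulerLagrange L Φ B x) := by
    simp only [hJ]
    have : ∀ i, pd i (J i) x = ∑ B : Fin f, pd i (fun y => ∑ Z ∈ Finset.range N,
      SL Z (fun v => pds v (δΦ B) y * KF N (PL L Φ B) i Z v y)) x := fun i =>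
        aux_pd_sum _ i (hJB i) x
    simp only [hJ] at this
    simp only [this]
    rw [Finset.sum_comm]
    refine Finset.sum_congr rfl fun B _ => ?_
    rw [aux_div N (PL L Φ B) (hPs B) (PL_perm L hL hLsymm Φ hΦ B) (δΦ B) (hδΦ B) x, aux_EL,
      ← Finset.sum_mul, mul_comm (δΦ B x)]
  rw [this, Finset.sum_sub_distrib]
  ring
end

section
/- Noether's theorem (N-th order, r parameters). Suppose ζ_α : ℝⁿ → ℝⁿ and ψ_{α,B} : ℝⁿ → ℝ (α = 1,…,r; B = 1,…,f) are smooth, and set ψ̄_{α,B}(x) := ψ_{α,B}(x) − ζ_α^σ(x) ∂_σΦ_B(x). Assume the infinitesimal invariance identity holds along Φ: for every α and every x ∈ ℝⁿ, ∂_λ[ ζ_α^λ(x) · L(x, jetΦ(x)) ] + Σ_{B=1}^{f} Σ_{X=0}^{N} (∂_{μ₁}⋯∂_{μ_X} ψ̄_{α,B})(x) · [∂L/∂q^X_{B,μ₁…μ_X} along the jet of Φ] = 0. If moreover Φ satisfies the Euler–Lagrange equations E_B ≡ 0 on ℝⁿ, then for each α = 1,…,r the current j_α^λ(x) := ζ_α^λ(x)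 L(x, jetΦ(x)) + Σ_{B=1}^{f} Σ_{Z=0}^{N−1} (∂_{ν₁}⋯∂_{ν_Z} ψ̄_{α,B})(x) · K^{Bλν₁…ν_Z}(x) satisfies the continuity equation ∂_λ j_α^λ(x) = 0 for all x ∈ ℝⁿ. -/
open scoped BigOperators

/-- The field-form variation `ψ̄_{α,B}(x) = ψ_{α,B}(x) − ζ_α^σ(x) ∂_σ Φ_B(x)`. -/
noncomputable def psibar {n f r : ℕ} (ζ : Fin r → (Fin n → ℝ) → Fin n → ℝ)
    (ψ : Fin r → Fin f → (Fin n → ℝ) → ℝ) (Φ : Fin f → (Fin n → ℝ) → ℝ)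
    (a : Fin r) (B : Fin f) (x : Fin n → ℝ) : ℝ :=
  ψ a B x - ∑ σ : Fin n, ζ a x σ * pd σ (Φ B) x

open scoped ContDiff

abbrev Sm {n : ℕ} (F : (Fin n → ℝ) → ℝ) : Prop := ContDiff ℝ (⊤ : ℕ∞) F

lemma Sm.pd {n : ℕ} {F : (Fin n → ℝ) → ℝ} (h : Sm F) (i : Fin n) : Sm (pd i F) := by
  have : ContDiff ℝ (⊤ : ℕ∞) (fderiv ℝ F) := h.fderiv_right (by simp)
  exact this.clm_apply contDiff_const

lemma Sm.pds {n : ℕ} {F : (Fin n → ℝ) → ℝ} (h : Sm F) (l : List (Fin n)) : Sm (pds l F) := by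
  induction l with
  | nil => exact h
  | cons i l ih => exact ih.pd i

lemma Sm.diff {n : ℕ} {F : (Fin n → ℝ) → ℝ} (h : Sm F) (x) : DifferentiableAt ℝ F x :=
  (h.differentiable (by simp)) x

lemma pd_comm {n : ℕ} {F : (Fin n → ℝ) → ℝ} (h : Sm F) (i j : Fin n) :
    pd i (pd j F) = pd j (pd i F) := by
  have hd : Differentiable ℝ (fderiv ℝ F) :=
    (h.fderiv_right (m := (⊤ : ℕ∞)) (by simp)).differentiable (by simp)
  have key : ∀ i j x, pd i (pd j F) x
      = fderiv ℝ (fderiv ℝ F) x (Pi.single i 1) (Pi.single j 1) := by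
    intro i j x
    have := ((hd x).hasFDerivAt.clm_apply (hasFDerivAt_const (Pi.single j (1:ℝ)) x)).fderiv
    unfold pd
    rw [this]
    simp
  funext x
  rw [key, key]
  have hs : IsSymmSndFDerivAt ℝ F x := by
    apply ContDiffAt.isSymmSndFDerivAt (n := (⊤ : ℕ∞)) h.contDiffAt
    simpa using (WithTop.coe_le_coe.2 (le_top : (2 : ℕ∞) ≤ ⊤))
  exact hs _ _

lemma pds_perm {n : ℕ} {F : (Fin n → ℝ) → ℝ} (h : Sm F) {l l' : List (Fin n)}
    (hl : l.Perm l') : pds l F = pds l' F := by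
  induction hl with
  | nil => rfl
  | cons i _ ih => simp only [pds, ih]
  | swap i j l => exact pd_comm (h.pds l) j i
  | trans _ _ ih1 ih2 => exact ih1.trans ih2

lemma pd_add {n : ℕ} {F G : (Fin n → ℝ) → ℝ} (hF : Sm F) (hG : Sm G) (i x) :
    pd i (fun x => F x + G x) x = pd i F x + pd i G x := by
  unfold pd
  rw [fderiv_fun_add (hF.diff x) (hG.diff x)]
  rfl

lemma pd_mul {n : ℕ} {F G : (Fin n → ℝ) → ℝ} (hF : Sm F) (hG : Sm G) (i x) :
    pd i (fun x => F x * G x) x = pd i F x * G x + F x * pd i G x := by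
  unfold pd
  rw [fderiv_fun_mul (hF.diff x) (hG.diff x)]
  simp
  ring

lemma pd_sum {n : ℕ} {ι : Type*} (s : Finset ι) {F : ι → (Fin n → ℝ) → ℝ}
    (hF : ∀ k, Sm (F k)) (i x) :
    pd i (fun x => ∑ k ∈ s, F k x) x = ∑ k ∈ s, pd i (F k) x := by
  unfold pd
  rw [fderiv_fun_sum (fun k _ => (hF k).diff x)]
  simp

lemma pd_const_mul {n : ℕ} {F : (Fin n → ℝ) → ℝ} (hF : Sm F) (c : ℝ) (i x) :
    pd i (fun x => c * F x) x = c * pd i F x := by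
  unfold pd
  rw [fderiv_const_mul (hF.diff x)]
  rfl

lemma sum_cons {n k : ℕ} (F : List (Fin n) → ℝ) :
    ∑ mu : Fin (k + 1) → Fin n, F (List.ofFn mu)
      = ∑ i : Fin n, ∑ mu : Fin k → Fin n, F (i :: List.ofFn mu) := by
  rw [← (Fin.consEquiv (fun _ : Fin (k+1) => Fin n)).sum_comp, Fintype.sum_prod_type]
  simp [Fin.consEquiv, List.ofFn_succ]

/-- Mixed term. -/
noncomputable def DD {n : ℕ} (u : (Fin n → ℝ) → ℝ) (P : List (Fin n) → (Fin n → ℝ) → ℝ)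
    (x : Fin n → ℝ) (Z Y : ℕ) : ℝ :=
  ∑ nu : Fin Z → Fin n, ∑ mu : Fin Y → Fin n,
    pds (List.ofFn nu) u x * ((-1 : ℝ) ^ Y *
      pds (List.ofFn mu) (P (List.ofFn mu ++ List.ofFn nu)) x)

lemma div_step {n : ℕ} {u : (Fin n → ℝ) → ℝ} {P : List (Fin n) → (Fin n → ℝ) → ℝ}
    (hu : Sm u) (hP : ∀ l, Sm (P l)) (hperm : ∀ l l', l.Perm l' → P l = P l')
    (x : Fin n → ℝ) (Z Y : ℕ) :
    ∑ lam : Fin n, ∑ nu : Fin Z → Fin n, ∑ mu : Fin Y → Fin n,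
      pd lam (fun x => pds (List.ofFn nu) u x * ((-1 : ℝ) ^ Y *
        pds (List.ofFn mu) (P (lam :: (List.ofFn mu ++ List.ofFn nu))) x)) x
      = DD u P x (Z + 1) Y - DD u P x Z (Y + 1) := by
  have h1 : DD u P x (Z + 1) Y = ∑ lam : Fin n, ∑ nu : Fin Z → Fin n, ∑ mu : Fin Y → Fin n,
      pd lam (pds (List.ofFn nu) u) x * ((-1 : ℝ) ^ Y *
        pds (List.ofFn mu) (P (lam :: (List.ofFn mu ++ List.ofFn nu))) x) := by
    unfold DD
    rw [sum_cons (fun l => ∑ mu : Fin Y → Fin n, pds l u x * ((-1 : ℝ) ^ Y *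
      pds (List.ofFn mu) (P (List.ofFn mu ++ l)) x))]
    refine Finset.sum_congr rfl fun lam _ => Finset.sum_congr rfl fun nu _ =>
      Finset.sum_congr rfl fun mu _ => ?_
    rw [hperm _ _ (List.perm_middle)]
    rfl
  have h2 : DD u P x Z (Y + 1) = - ∑ lam : Fin n, ∑ nu : Fin Z → Fin n, ∑ mu : Fin Y → Fin n,
      pds (List.ofFn nu) u x * ((-1 : ℝ) ^ Y *
        pd lam (pds (List.ofFn mu) (P (lam :: (List.ofFn mu ++ List.ofFn nu)))) x) := by
    unfold DD
    rw [Finset.sum_comm (s := (Finset.univ : Finset (Fin n))), ← Finset.sum_neg_distrib]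
    refine Finset.sum_congr rfl fun nu _ => ?_
    rw [sum_cons (fun l => pds (List.ofFn nu) u x * ((-1 : ℝ) ^ (Y + 1) *
      pds l (P (l ++ List.ofFn nu)) x)), ← Finset.sum_neg_distrib]
    refine Finset.sum_congr rfl fun lam _ => ?_
    rw [← Finset.sum_neg_distrib]
    refine Finset.sum_congr rfl fun mu _ => ?_
    simp only [pds, List.cons_append]
    ring
  rw [h1, h2, sub_neg_eq_add]
  simp only [← Finset.sum_add_distrib]
  refine Finset.sum_congr rfl fun lam _ => Finset.sum_congr rfl fun nu _ =>
      Finset.sum_congr rfl fun mu _ => ?_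
  rw [pd_mul (hu.pds _) (contDiff_const.mul ((hP _).pds _)), pd_const_mul ((hP _).pds _)]

lemma tele (D : ℕ → ℕ → ℝ) (N : ℕ) :
    ∑ Z : Fin N, ∑ Y : Fin (N - (Z : ℕ)), (D (Z + 1) Y - D Z (Y + 1))
      = ∑ X : Fin (N + 1), D X 0 - ∑ X : Fin (N + 1), D 0 X := by
  have e1 : ∀ Z : ℕ, ∑ Y : Fin (N - Z), (D (Z + 1) Y - D Z (Y + 1))
      = ∑ Y ∈ Finset.range (N - Z), (D (Z + 1) Y - D Z (Y + 1)) := fun Z =>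
    Fin.sum_univ_eq_sum_range (fun Y => D (Z + 1) Y - D Z (Y + 1)) (N - Z)
  simp only [e1]
  rw [Fin.sum_univ_eq_sum_range (fun Z => ∑ Y ∈ Finset.range (N - Z), (D (Z + 1) Y - D Z (Y + 1))),
    Fin.sum_univ_eq_sum_range (fun X => D X 0), Fin.sum_univ_eq_sum_range (fun X => D 0 X)]
  simp only [Finset.sum_sub_distrib]
  have a1 := Finset.sum_range_succ' (fun Z => ∑ Y ∈ Finset.range (N + 1 - Z), D Z Y) N
  have a2 := Finset.sum_range_succ (fun Z => ∑ Y ∈ Finset.range (N + 1 - Z), D Z Y) N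
  have a3 : ∑ Z ∈ Finset.range N, ∑ Y ∈ Finset.range (N + 1 - Z), D Z Y
      = ∑ Z ∈ Finset.range N, (∑ Y ∈ Finset.range (N - Z), D Z (Y + 1)) 
        + ∑ Z ∈ Finset.range N, D Z 0 := by
    rw [← Finset.sum_add_distrib]
    refine Finset.sum_congr rfl fun Z hZ => ?_
    rw [Finset.mem_range] at hZ
    rw [show N + 1 - Z = (N - Z) + 1 by omega, Finset.sum_range_succ']
  have a4 := Finset.sum_range_succ (fun X => D X 0) N
  simp only [Nat.add_sub_add_right, Nat.sub_zero, Nat.add_sub_cancel_left,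
    Finset.sum_range_one] at a1 a2
  linarith

lemma idx_eq {n f N m k : ℕ} (h : m = k) (hm : m < N + 1) (hk : k < N + 1) (B : Fin f)
    (g : Fin m → Fin n) (mu : Fin k → Fin n) (hg : ∀ i, g i = mu (Fin.cast h i)) :
    (⟨⟨m, hm⟩, B, g⟩ : JIdx n f N) = ⟨⟨k, hk⟩, B, mu⟩ := by
  subst h
  have : g = mu := funext hg
  rw [this]

/-- List-indexed version of `dLdq`. -/
noncomputable def PP {n f N : ℕ} (L : (Fin n → ℝ) → Jet n f N → ℝ)
    (Φ : Fin f → (Fin n → ℝ) → ℝ) (B : Fin f) (l : List (Fin n)) : (Fin n → ℝ) → ℝ :=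
  if h : l.length < N + 1 then dLdq L Φ ⟨⟨l.length, h⟩, B, l.get⟩ else fun _ => 0

lemma PP_ofFn {n f N : ℕ} (L : (Fin n → ℝ) → Jet n f N → ℝ)
    (Φ : Fin f → (Fin n → ℝ) → ℝ) (B : Fin f) (X : Fin (N + 1)) (mu : Fin (X : ℕ) → Fin n) :
    dLdq L Φ ⟨X, B, mu⟩ = PP L Φ B (List.ofFn mu) := by
  unfold PP
  rw [dif_pos (by simp only [List.length_ofFn]; exact X.2)]
  congr 1
  refine (idx_eq (by simp) _ _ _ _ _ ?_).symm
  intro i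
  simp [Fin.cast]

lemma jet_smooth {n f N : ℕ} {Φ : Fin f → (Fin n → ℝ) → ℝ}
    (hΦ : ∀ B, ContDiff ℝ (⊤ : ℕ∞) (Φ B)) :
    ContDiff ℝ (⊤ : ℕ∞) (fun x => (jet Φ x : Jet n f N)) :=
  contDiff_pi.2 fun idx => Sm.pds (hΦ idx.2.1) _

lemma dLdq_smooth {n f N : ℕ} {L : (Fin n → ℝ) → Jet n f N → ℝ}
    (hL : ContDiff ℝ (⊤ : ℕ∞) (fun p : (Fin n → ℝ) × Jet n f N => L p.1 p.2))
    {Φ : Fin f → (Fin n → ℝ) → ℝ} (hΦ : ∀ B, ContDiff ℝ (⊤ : ℕ∞) (Φ B)) (idx) :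
    Sm (dLdq L Φ idx) := by
  have := ContDiff.fderiv (𝕜 := ℝ) (f := L) (n := (⊤ : ℕ∞)) hL (jet_smooth (N := N) hΦ) (by simp)
  exact this.clm_apply contDiff_const

lemma PP_smooth {n f N : ℕ} {L : (Fin n → ℝ) → Jet n f N → ℝ}
    (hL : ContDiff ℝ (⊤ : ℕ∞) (fun p : (Fin n → ℝ) × Jet n f N => L p.1 p.2))
    {Φ : Fin f → (Fin n → ℝ) → ℝ} (hΦ : ∀ B, ContDiff ℝ (⊤ : ℕ∞) (Φ B)) (B l) :
    Sm (PP L Φ B l) := by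
  unfold PP
  split_ifs
  · exact dLdq_smooth hL hΦ _
  · exact contDiff_const

lemma permJet_jet {n f N : ℕ} {Φ : Fin f → (Fin n → ℝ) → ℝ}
    (hΦ : ∀ B, ContDiff ℝ (⊤ : ℕ∞) (Φ B)) (X : Fin (N + 1)) (σ : Equiv.Perm (Fin (X : ℕ))) (x) :
    permJet X σ (jet Φ x : Jet n f N) = jet Φ x := by
  funext ⟨Y, B, nu⟩
  unfold permJet
  split_ifs with h
  · dsimp only at h
    subst h
    simp only [jet]
    have := pds_perm (hΦ B) (Equiv.Perm.ofFn_comp_perm σ nu)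
    exact congrFun this x
  · rfl

lemma permJet_single {n f N : ℕ} (X : Fin (N + 1)) (σ : Equiv.Perm (Fin (X : ℕ)))
    (B : Fin f) (mu : Fin (X : ℕ) → Fin n) :
    permJet X σ (Pi.single (⟨X, B, mu ∘ σ⟩ : JIdx n f N) (1 : ℝ)) = Pi.single ⟨X, B, mu⟩ 1 := by
  funext ⟨Y, C, nu⟩
  unfold permJet
  split_ifs with h
  · dsimp only at h
    subst h
    have hh : ((⟨Y, C, nu ∘ σ⟩ : JIdx n f N) = ⟨Y, B, mu ∘ σ⟩) ↔
        ((⟨Y, C, nu⟩ : JIdx n f N) = ⟨Y, B, mu⟩) := by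
      simp [σ.surjective.injective_comp_right.eq_iff]
    simp only [Pi.single_apply]
    exact if_congr hh rfl rfl
  · have : (⟨Y, C, nu⟩ : JIdx n f N) ≠ ⟨X, B, mu⟩ := fun e => h (congrArg Sigma.fst e)
    have h2 : (⟨Y, C, nu⟩ : JIdx n f N) ≠ ⟨X, B, mu ∘ σ⟩ := fun e => h (congrArg Sigma.fst e)
    rw [Pi.single_eq_of_ne this, Pi.single_eq_of_ne h2]

/-- `permJet` as a linear map. -/
noncomputable def permL {n f N : ℕ} (X : Fin (N + 1)) (σ : Equiv.Perm (Fin (X : ℕ))) :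
    Jet n f N →ₗ[ℝ] Jet n f N where
  toFun := permJet X σ
  map_add' p q := by
    funext idx
    simp only [permJet, Pi.add_apply]
    split_ifs <;> rfl
  map_smul' c q := by
    funext idx
    simp only [permJet, Pi.smul_apply]
    split_ifs <;> rfl

lemma dLdq_perm {n f N : ℕ} {L : (Fin n → ℝ) → Jet n f N → ℝ}
    (hL : ContDiff ℝ (⊤ : ℕ∞) (fun p : (Fin n → ℝ) × Jet n f N => L p.1 p.2))
    (hLsymm : ∀ (x : Fin n → ℝ) (q : Jet n f N) (X : Fin (N + 1))
      (σ : Equiv.Perm (Fin (X : ℕ))), L x (permJet X σ q) = L x q)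
    {Φ : Fin f → (Fin n → ℝ) → ℝ} (hΦ : ∀ B, ContDiff ℝ (⊤ : ℕ∞) (Φ B))
    (X : Fin (N + 1)) (σ : Equiv.Perm (Fin (X : ℕ))) (B : Fin f) (mu : Fin (X : ℕ) → Fin n) :
    dLdq L Φ ⟨X, B, mu ∘ σ⟩ = dLdq L Φ ⟨X, B, mu⟩ := by
  funext x
  let M : Jet n f N →L[ℝ] Jet n f N := LinearMap.toContinuousLinearMap (permL X σ)
  have hM : ∀ q, M q = permJet X σ q := fun q => rfl
  have hLx : Differentiable ℝ (L x) := by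
    have : ContDiff ℝ (⊤ : ℕ∞) (L x) := hL.comp (contDiff_const.prodMk contDiff_id)
    exact this.differentiable (by simp)
  have e : (L x) ∘ M = L x := by
    funext q
    exact hLsymm x q X σ
  have h := fderiv_comp (jet Φ x : Jet n f N) (hLx (M (jet Φ x))) M.differentiableAt
  rw [e, hM, permJet_jet hΦ, ContinuousLinearMap.fderiv] at h
  unfold dLdq
  rw [← permJet_single X σ B mu, ← hM]
  exact congrArg (fun A => A (Pi.single (⟨X, B, mu ∘ σ⟩ : JIdx n f N) (1 : ℝ))) h

lemma PP_perm {n f N : ℕ} {L : (Fin n → ℝ) → Jet n f N → ℝ}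
    (hL : ContDiff ℝ (⊤ : ℕ∞) (fun p : (Fin n → ℝ) × Jet n f N => L p.1 p.2))
    (hLsymm : ∀ (x : Fin n → ℝ) (q : Jet n f N) (X : Fin (N + 1))
      (σ : Equiv.Perm (Fin (X : ℕ))), L x (permJet X σ q) = L x q)
    {Φ : Fin f → (Fin n → ℝ) → ℝ} (hΦ : ∀ B, ContDiff ℝ (⊤ : ℕ∞) (Φ B)) (B : Fin f)
    (l l' : List (Fin n)) (hl : l.Perm l') : PP L Φ B l = PP L Φ B l' := by
  have hlen := hl.length_eq
  by_cases h : l.length < N + 1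
  · obtain ⟨m, hm⟩ : ∃ m, l.length = m := ⟨_, rfl⟩
    obtain ⟨g, rfl⟩ : ∃ g : Fin m → Fin n, l = List.ofFn g := by
      subst hm; exact ⟨l.get, by simp⟩
    obtain ⟨g', rfl⟩ : ∃ g : Fin m → Fin n, l' = List.ofFn g := by
      rw [hm] at hlen; subst hlen; exact ⟨l'.get, by simp⟩
    have hmN : m < N + 1 := by simpa using h
    have hs : ∃ σ : Equiv.Perm (Fin m), g = g' ∘ σ := by
      have h1 := Equiv.Perm.ofFn_comp_perm (Tuple.sort g) g
      have h2 := Equiv.Perm.ofFn_comp_perm (Tuple.sort g') g'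
      have h3 := (h1.trans hl).trans h2.symm
      have h4 := h3.eq_of_sortedLE (Tuple.monotone_sort g).sortedLE_ofFn
        (Tuple.monotone_sort g').sortedLE_ofFn
      have h5 : g ∘ Tuple.sort g = g' ∘ Tuple.sort g' := List.ofFn_injective h4
      refine ⟨(Tuple.sort g).symm.trans (Tuple.sort g'), ?_⟩
      funext i
      have := congrFun h5 ((Tuple.sort g).symm i)
      simpa using this
    obtain ⟨σ, rfl⟩ := hs
    rw [← PP_ofFn L Φ B ⟨m, hmN⟩ g', ← PP_ofFn L Φ B ⟨m, hmN⟩ (g' ∘ σ)]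
    exact dLdq_perm hL hLsymm hΦ ⟨m, hmN⟩ σ B g'
  · unfold PP
    rw [dif_neg h, dif_neg (by omega)]

lemma psibar_smooth {n f r : ℕ} 
    {Φ : Fin f → (Fin n → ℝ) → ℝ} (hΦ : ∀ B, ContDiff ℝ (⊤ : ℕ∞) (Φ B))
    {ζ : Fin r → (Fin n → ℝ) → Fin n → ℝ} (hζ : ∀ a, ContDiff ℝ (⊤ : ℕ∞) (ζ a))
    {ψ : Fin r → Fin f → (Fin n → ℝ) → ℝ} (hψ : ∀ a B, ContDiff ℝ (⊤ : ℕ∞) (ψ a B))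
    (a : Fin r) (B : Fin f) : Sm (psibar ζ ψ Φ a B) := by
  refine (hψ a B).sub (ContDiff.sum fun s _ => ?_)
  exact (contDiff_pi.1 (hζ a) s).mul (Sm.pd (hΦ B) s)

/-- Noether's theorem, equations (25)–(27) of the paper:
if the infinitesimal invariance identity holds along `Φ` for an `r`-parameter family
of infinitesimal transformations with generators `ζ_α, ψ_α`, and `Φ` satisfies the
Euler–Lagrange equations, then each Noether current `j_α` is divergence free. -/
theorem noether_theorem {n f N r : ℕ} (hn : 2 ≤ n) (hf : 1 ≤ f) (hN : 1 ≤ N)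
    (L : (Fin n → ℝ) → Jet n f N → ℝ)
    (hL : ContDiff ℝ (⊤ : ℕ∞) (fun p : (Fin n → ℝ) × Jet n f N => L p.1 p.2))
    (hLsymm : ∀ (x : Fin n → ℝ) (q : Jet n f N) (X : Fin (N + 1))
      (σ : Equiv.Perm (Fin (X : ℕ))), L x (permJet X σ q) = L x q)
    (Φ : Fin f → (Fin n → ℝ) → ℝ) (hΦ : ∀ B, ContDiff ℝ (⊤ : ℕ∞) (Φ B))
    (ζ : Fin r → (Fin n → ℝ) → Fin n → ℝ) (hζ : ∀ a, ContDiff ℝ (⊤ : ℕ∞) (ζ a))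
    (ψ : Fin r → Fin f → (Fin n → ℝ) → ℝ) (hψ : ∀ a B, ContDiff ℝ (⊤ : ℕ∞) (ψ a B))
    (hinvariance : ∀ (a : Fin r) (x : Fin n → ℝ),
      (∑ lam : Fin n, pd lam (fun x' => ζ a x' lam * L x' (jet Φ x')) x)
        + (∑ B : Fin f, ∑ X : Fin (N + 1), ∑ mu : Fin (X : ℕ) → Fin n,
            pds (List.ofFn mu) (psibar ζ ψ Φ a B) x * dLdq L Φ ⟨X, B, mu⟩ x) = 0)
    (hEL : ∀ (B : Fin f) (x : Fin n → ℝ), EulerLagrange L Φ B x = 0) :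
    ∀ (a : Fin r) (x : Fin n → ℝ),
      ∑ lam : Fin n,
        pd lam
          (fun x' => ζ a x' lam * L x' (jet Φ x')
            + ∑ B : Fin f, ∑ Z : Fin N, ∑ nu : Fin (Z : ℕ) → Fin n,
                pds (List.ofFn nu) (psibar ζ ψ Φ a B) x' * Kcur L Φ B lam Z nu x') x
        = 0 := by
  intro a x
  have hu : ∀ B, Sm (psibar ζ ψ Φ a B) := psibar_smooth hΦ hζ hψ a
  have hP : ∀ B l, Sm (PP L Φ B l) := PP_smooth hL hΦ
  have hLj : ∀ lam, Sm (fun x' => ζ a x' lam * L x' (jet Φ x')) := fun lam =>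
    (contDiff_pi.1 (hζ a) lam).mul (hL.comp (contDiff_id.prodMk (jet_smooth hΦ)))
  have hK : ∀ B lam (Z : Fin N) (nu : Fin (Z : ℕ) → Fin n) x', Kcur L Φ B lam Z nu x'
      = ∑ Y : Fin (N - (Z : ℕ)), ∑ mu : Fin (Y : ℕ) → Fin n, (-1 : ℝ) ^ (Y : ℕ) *
        pds (List.ofFn mu) (PP L Φ B (lam :: (List.ofFn mu ++ List.ofFn nu))) x' := by
    intro B lam Z nu x'
    unfold Kcur
    refine Finset.sum_congr rfl fun Y _ => Finset.sum_congr rfl fun mu _ => ?_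
    rw [PP_ofFn]
    simp [List.ofFn_fin_append]
  simp only [hK, Finset.mul_sum]
  have hT : ∀ B lam (Z : Fin N) (nu : Fin (Z : ℕ) → Fin n) (Y : Fin (N - (Z : ℕ)))
      (mu : Fin (Y : ℕ) → Fin n), Sm (fun x' => pds (List.ofFn nu) (psibar ζ ψ Φ a B) x' *
        ((-1 : ℝ) ^ (Y : ℕ) *
        pds (List.ofFn mu) (PP L Φ B (lam :: (List.ofFn mu ++ List.ofFn nu))) x')) :=
    fun B lam Z nu Y mu => ((hu B).pds _).mul (contDiff_const.mul ((hP _ _).pds _))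
  have h5 := fun B lam Z nu Y => ContDiff.sum (s := Finset.univ) fun mu _ => hT B lam Z nu Y mu
  have h4 := fun B lam Z nu => ContDiff.sum (s := Finset.univ) fun Y _ => h5 B lam Z nu Y
  have h3 := fun B lam Z => ContDiff.sum (s := Finset.univ) fun nu _ => h4 B lam Z nu
  have h2 := fun B lam => ContDiff.sum (s := Finset.univ) fun Z _ => h3 B lam Z
  have h1 := fun lam => ContDiff.sum (s := Finset.univ) fun B _ => h2 B lam
  have hexp : ∀ lam, pd lam (fun x' => ζ a x' lam * L x' (jet Φ x')
      + ∑ B : Fin f, ∑ Z : Fin N, ∑ nu : Fin (Z : ℕ) → Fin n, ∑ Y : Fin (N - (Z : ℕ)),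
        ∑ mu : Fin (Y : ℕ) → Fin n, pds (List.ofFn nu) (psibar ζ ψ Φ a B) x' *
        ((-1 : ℝ) ^ (Y : ℕ) *
        pds (List.ofFn mu) (PP L Φ B (lam :: (List.ofFn mu ++ List.ofFn nu))) x')) x
      = pd lam (fun x' => ζ a x' lam * L x' (jet Φ x')) x
      + ∑ B : Fin f, ∑ Z : Fin N, ∑ Y : Fin (N - (Z : ℕ)), ∑ nu : Fin (Z : ℕ) → Fin n, 
        ∑ mu : Fin (Y : ℕ) → Fin n, pd lam (fun x' => pds (List.ofFn nu) (psibar ζ ψ Φ a B) x' *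
        ((-1 : ℝ) ^ (Y : ℕ) *
        pds (List.ofFn mu) (PP L Φ B (lam :: (List.ofFn mu ++ List.ofFn nu))) x')) x := by
    intro lam
    rw [pd_add (hLj lam) (h1 lam), pd_sum _ (fun B => h2 B lam)]
    congr 1
    refine Finset.sum_congr rfl fun B _ => ?_
    rw [pd_sum _ (fun Z => h3 B lam Z)]
    refine Finset.sum_congr rfl fun Z _ => ?_
    rw [pd_sum _ (fun nu => h4 B lam Z nu), Finset.sum_comm]
    refine Finset.sum_congr rfl fun nu _ => ?_
    rw [pd_sum _ (fun Y => h5 B lam Z nu Y)]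
    refine Finset.sum_congr rfl fun Y _ => ?_
    rw [pd_sum _ (fun mu => hT B lam Z nu Y mu)]
  simp only [hexp]
  rw [Finset.sum_add_distrib]
  rw [← hinvariance a x]
  congr 1
  rw [Finset.sum_comm]
  refine Finset.sum_congr rfl fun B _ => ?_
  rw [Finset.sum_comm]
  have hstep : ∀ Z : Fin N, ∑ lam : Fin n, ∑ Y : Fin (N - (Z : ℕ)), ∑ nu : Fin (Z : ℕ) → Fin n, 
        ∑ mu : Fin (Y : ℕ) → Fin n, pd lam (fun x' => pds (List.ofFn nu) (psibar ζ ψ Φ a B) x' *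
        ((-1 : ℝ) ^ (Y : ℕ) *
        pds (List.ofFn mu) (PP L Φ B (lam :: (List.ofFn mu ++ List.ofFn nu))) x')) x
      = ∑ Y : Fin (N - (Z : ℕ)), (DD (psibar ζ ψ Φ a B) (PP L Φ B) x (Z + 1) Y
        - DD (psibar ζ ψ Φ a B) (PP L Φ B) x Z (Y + 1)) := by
    intro Z
    rw [Finset.sum_comm]
    exact Finset.sum_congr rfl fun Y _ =>
      div_step (hu B) (hP B) (PP_perm hL hLsymm hΦ B) x Z Y
  rw [Finset.sum_congr rfl fun Z _ => hstep Z, tele]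
  have hE : ∑ X : Fin (N + 1), DD (psibar ζ ψ Φ a B) (PP L Φ B) x 0 X = 0 := by
    have := hEL B x
    unfold EulerLagrange at this
    simp only [PP_ofFn] at this
    simp only [DD, List.ofFn_zero, List.append_nil, pds, ← Finset.mul_sum, Finset.univ_unique,
      Finset.sum_singleton]
    simp only [← Finset.mul_sum] at this
    rw [this, mul_zero]
  rw [hE, sub_zero]
  refine Finset.sum_congr rfl fun X _ => ?_
  simp [DD, PP_ofFn, pds]
end

section
/- Proposition (Appendix B, equation (B2)): the Noether current remainder I transforms as a vector. Let y : ℝ⁴ → ℝ⁴ be a smooth diffeomorphism with smooth inverse. Let g_x, g_y be smooth maps from ℝ⁴ to invertible symmetric real 4×4 matrices related tensorially by g_{x,αβ}(x) = (∂y^μ/∂x^α)(x)(∂y^ν/∂x^β)(x) g_{y,μν}(y(x)), and let v_x, v_y be smooth symmetric 4×4 matrix fields related tensorially by v_{x,αβ}(x) = (∂y^μ/∂x^α)(x)(∂y^ν/∂x^β)(x) v_{y,μν}(y(x)). In each coordinate system, with g^{αβ} the entries of the pointwise inverse metric, define D^{κμαβ} := ½(g^{ακ}g^{βμ} + g^{αμ}g^{βκ})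 − g^{αβ}g^{κμ}; Γ_μ := ½ Σ g^{νρ} ∂_μ g_{νρ}; C^{καβμξη} := −½ g^{αξ}g^{βμ}g^{κη} + ½ g^{αμ}g^{βξ}g^{κη} − ½ g^{αξ}g^{βκ}g^{μη} − ½ g^{ακ}g^{βξ}g^{μη} + ½ g^{αξ}g^{βη}g^{κμ} + g^{ακ}g^{βμ}g^{ξη} − ½ g^{αβ}g^{κμ}g^{ξη}; and the current I^κ := [ Σ C^{καβμξη} ∂_μ g_{ξη} − Σ Γ_μ D^{κμαβ} ] v_{αβ} + Σ D^{κμαβ} ∂_μ v_{αβ}. Then I_y^λ(y(x)) = Σ_κ (∂y^λ/∂x^κ)(x) · I_x^κ(x) for every x ∈ ℝ⁴, i.e. I transforms as a (1,0)-tensor even though its individual summands do not. -/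
open scoped BigOperators

/-- The Jacobian matrix `(Dy(x))^λ_κ = ∂y^λ/∂x^κ` of a map `y : ℝⁿ → ℝⁿ`. -/
noncomputable def jac {n : ℕ} (y : (Fin n → ℝ) → (Fin n → ℝ)) (x : Fin n → ℝ) :
    Matrix (Fin n) (Fin n) ℝ :=
  Matrix.of fun lam kap => pd kap (fun x' => y x' lam) x

/-- `∂R/∂(∂_κ∂_μ g_{αβ}) = ½(g^{ακ}g^{βμ} + g^{αμ}g^{βκ}) − g^{αβ}g^{κμ}`
(equation (B4) of the paper), for a metric field `g`. -/
noncomputable def Dco (g : (Fin 4 → ℝ) → Matrix (Fin 4) (Fin 4) ℝ)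
    (x : Fin 4 → ℝ) (κ μ α β : Fin 4) : ℝ :=
  (1 / 2 : ℝ) * ((g x)⁻¹ α κ * (g x)⁻¹ β μ + (g x)⁻¹ α μ * (g x)⁻¹ β κ)
    - (g x)⁻¹ α β * (g x)⁻¹ κ μ

/-- The contracted Christoffel symbol `Γ^ν_{νμ} = ½ g^{νρ} ∂_μ g_{νρ}`. -/
noncomputable def Gam (g : (Fin 4 → ℝ) → Matrix (Fin 4) (Fin 4) ℝ)
    (x : Fin 4 → ℝ) (μ : Fin 4) : ℝ :=
  (1 / 2 : ℝ) * ∑ ν : Fin 4, ∑ ρ : Fin 4, (g x)⁻¹ ν ρ * pd μ (fun x' => g x' ν ρ) x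

/-- The coefficient `C^{καβμξη}` of equation (B7) of the paper. -/
noncomputable def Cco (g : (Fin 4 → ℝ) → Matrix (Fin 4) (Fin 4) ℝ)
    (x : Fin 4 → ℝ) (κ α β μ ξ η : Fin 4) : ℝ :=
  -(1 / 2 : ℝ) * (g x)⁻¹ α ξ * (g x)⁻¹ β μ * (g x)⁻¹ κ η
    + (1 / 2 : ℝ) * (g x)⁻¹ α μ * (g x)⁻¹ β ξ * (g x)⁻¹ κ η
    - (1 / 2 : ℝ) * (g x)⁻¹ α ξ * (g x)⁻¹ β κ * (g x)⁻¹ μ η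
    - (1 / 2 : ℝ) * (g x)⁻¹ α κ * (g x)⁻¹ β ξ * (g x)⁻¹ μ η
    + (1 / 2 : ℝ) * (g x)⁻¹ α ξ * (g x)⁻¹ β η * (g x)⁻¹ κ μ
    + (g x)⁻¹ α κ * (g x)⁻¹ β μ * (g x)⁻¹ ξ η
    - (1 / 2 : ℝ) * (g x)⁻¹ α β * (g x)⁻¹ κ μ * (g x)⁻¹ ξ η

/-- The metric part `I^κ` of the Noether current (equation (B1) of the paper), built
from a metric field `g` and a symmetric matrix field `v` (representing `δ̄g`). -/
noncomputable def Icur (g v : (Fin 4 → ℝ) → Matrix (Fin 4) (Fin 4) ℝ)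
    (x : Fin 4 → ℝ) (κ : Fin 4) : ℝ :=
  (∑ α : Fin 4, ∑ β : Fin 4,
    ((∑ μ : Fin 4, ∑ ξ : Fin 4, ∑ η : Fin 4,
        Cco g x κ α β μ ξ η * pd μ (fun x' => g x' ξ η) x)
      - ∑ μ : Fin 4, Gam g x μ * Dco g x κ μ α β) * v x α β)
    + ∑ μ : Fin 4, ∑ α : Fin 4, ∑ β : Fin 4,
        Dco g x κ μ α β * pd μ (fun x' => v x' α β) x

/-- Contraction of the derivative index with the second matrix index. -/
noncomputable def dvg (N : Fin 4 → Matrix (Fin 4) (Fin 4) ℝ) : Fin 4 → ℝ :=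
  fun κ => ∑ μ, N μ κ μ

/-- Matrix form of the current. -/
noncomputable def Fcur (G v : Matrix (Fin 4) (Fin 4) ℝ)
    (P Q : Fin 4 → Matrix (Fin 4) (Fin 4) ℝ) : Fin 4 → ℝ :=
  (1 / 2 : ℝ) • (G.mulVec fun μ => (P μ * (G * v * G)).trace)
    - dvg (fun μ => G * v * G * P μ * G)
    + (1 / 2 : ℝ) • ((G * v * G).mulVec fun μ => (G * P μ).trace)
    + dvg (fun μ => G * Q μ * G)
    - G.mulVec fun μ => (G * Q μ).trace

theorem Fcur_add (G v : Matrix (Fin 4) (Fin 4) ℝ)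
    (P Q P' Q' : Fin 4 → Matrix (Fin 4) (Fin 4) ℝ) :
    Fcur G v (P + P') (Q + Q') = Fcur G v P Q + Fcur G v P' Q' := by
  ext κ
  simp only [Fcur, dvg, Matrix.mulVec, dotProduct, Pi.add_apply, Pi.sub_apply, Pi.smul_apply,
    smul_eq_mul, mul_add, add_mul, Matrix.trace_add, Matrix.add_apply, Finset.sum_add_distrib]
  ring

theorem Fcur_gauge (g G v : Matrix (Fin 4) (Fin 4) ℝ) (hgG : g * G = 1) (hGg : G * g = 1)
    (hG : G.IsSymm) (hv : v.IsSymm)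
    (A : Fin 4 → Matrix (Fin 4) (Fin 4) ℝ) (hA : ∀ a b c, A a b c = A c b a) :
    Fcur G v (fun μ => (A μ).transpose * g + g * A μ)
      (fun μ => (A μ).transpose * v + v * A μ) = 0 := by
  have hg : g.IsSymm := by
    have : G⁻¹ = g := Matrix.inv_eq_left_inv hgG
    rw [← this, Matrix.IsSymm, Matrix.transpose_nonsing_inv, hG]
  have t1 : ∀ μ, (((A μ).transpose * g + g * A μ) * (G * v * G)).trace
      = 2 * (G * v * A μ).trace := by
    intro μ
    have e1 : (A μ).transpose * g * (G * v * G) = (A μ).transpose * (v * G) := by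
      rw [show (A μ).transpose * g * (G * v * G) = (A μ).transpose * ((g * G) * (v * G)) by
        noncomm_ring, hgG, one_mul]
    have e2 : (g * A μ * (G * v * G)).trace = (G * v * A μ).trace := by
      rw [Matrix.trace_mul_comm, show G * v * G * (g * A μ) = G * v * (G * g) * A μ by
        noncomm_ring, hGg, mul_one]
    have e3 : ((A μ).transpose * (v * G)).trace = (G * v * A μ).trace := by
      rw [← Matrix.trace_transpose]
      simp [Matrix.transpose_mul, hG.eq, hv.eq]
    rw [add_mul, Matrix.trace_add, e1, e2, e3]; ring
  have t2 : ∀ μ, G * v * G * ((A μ).transpose * g + g * A μ) * G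
      = G * v * G * (A μ).transpose + G * v * A μ * G := by
    intro μ
    rw [show G * v * G * ((A μ).transpose * g + g * A μ) * G
      = G * v * G * (A μ).transpose * (g * G) + G * v * (G * g) * A μ * G by noncomm_ring,
      hgG, hGg, mul_one, mul_one]
  have t3 : ∀ μ, (G * ((A μ).transpose * g + g * A μ)).trace = 2 * (A μ).trace := by
    intro μ
    have e1 : (G * ((A μ).transpose * g)).trace = (A μ).trace := by
      rw [Matrix.trace_mul_comm, mul_assoc, hgG, mul_one, Matrix.trace_transpose]
    rw [mul_add, Matrix.trace_add, e1, ← mul_assoc, hGg, one_mul]; ring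
  have t5 : ∀ μ, (G * ((A μ).transpose * v + v * A μ)).trace = 2 * (G * v * A μ).trace := by
    intro μ
    have e1 : (G * ((A μ).transpose * v)).trace = (G * v * A μ).trace := by
      rw [← Matrix.trace_transpose]
      simp only [Matrix.transpose_mul, Matrix.transpose_transpose, hG.eq, hv.eq]
      rw [Matrix.trace_mul_comm, ← mul_assoc]
    rw [mul_add, Matrix.trace_add, e1, ← mul_assoc]; ring
  have t4 : ∀ μ, G * ((A μ).transpose * v + v * A μ) * G
      = G * ((A μ).transpose * (v * G)) + G * v * A μ * G := by
    intro μ; noncomm_ring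
  have d1 : ∀ M : Matrix (Fin 4) (Fin 4) ℝ, dvg (fun μ => M * (A μ).transpose)
      = M.mulVec fun μ => (A μ).trace := by
    intro M; ext κ
    simp only [dvg, Matrix.mulVec, dotProduct, Matrix.mul_apply, Matrix.trace, Matrix.diag_apply,
      Matrix.transpose_apply, Finset.mul_sum]
    rw [Finset.sum_comm]
    refine Finset.sum_congr rfl fun a _ => Finset.sum_congr rfl fun b _ => ?_
    rw [hA b b a]
  have d2 : dvg (fun μ => G * ((A μ).transpose * (v * G)))
      = G.mulVec fun μ => (G * v * A μ).trace := by
    have e3 : ∀ μ, (G * v * A μ).trace = ((A μ).transpose * (v * G)).trace := by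
      intro μ
      rw [← Matrix.trace_transpose]
      simp [Matrix.transpose_mul, hG.eq, hv.eq]
    simp only [e3]
    generalize v * G = N
    ext κ
    simp only [dvg, Matrix.mulVec, dotProduct, Matrix.mul_apply, Matrix.trace, Matrix.diag_apply,
      Matrix.transpose_apply, Finset.mul_sum]
    rw [Finset.sum_comm]
    refine Finset.sum_congr rfl fun a _ => Finset.sum_congr rfl fun b _ =>
      Finset.sum_congr rfl fun c _ => ?_
    rw [hA b c a]
  have dadd : ∀ M N : Fin 4 → Matrix (Fin 4) (Fin 4) ℝ,
      dvg (fun μ => M μ + N μ) = dvg M + dvg N := by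
    intro M N; ext κ; simp [dvg, Finset.sum_add_distrib]
  have two : ∀ (M : Matrix (Fin 4) (Fin 4) ℝ) (t : Fin 4 → ℝ),
      M.mulVec (fun μ => 2 * t μ) = (2 : ℝ) • M.mulVec t := by
    intro M t; rw [← Matrix.mulVec_smul]; rfl
  simp only [Fcur, t1, t2, t3, t4, t5, dadd, d1, d2, two]
  ext κ
  simp only [Pi.add_apply, Pi.sub_apply, Pi.smul_apply, smul_eq_mul, Pi.zero_apply]
  ring

theorem Fcur_lin (J K G v : Matrix (Fin 4) (Fin 4) ℝ) (hJK : J * K = 1)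
    (P Q : Fin 4 → Matrix (Fin 4) (Fin 4) ℝ) :
    J.mulVec (Fcur (K * G * K.transpose) (J.transpose * v * J)
      (fun μ => J.transpose * (∑ l, J l μ • P l) * J)
      (fun μ => J.transpose * (∑ l, J l μ • Q l) * J)) = Fcur G v P Q := by
  have hT : K.transpose * J.transpose = 1 := by
    rw [← Matrix.transpose_mul, hJK, Matrix.transpose_one]
  have r1 : ∀ X : Matrix (Fin 4) (Fin 4) ℝ, K.transpose * (J.transpose * X) = X := by
    intro X; rw [← mul_assoc, hT, one_mul]
  have r2 : ∀ X : Matrix (Fin 4) (Fin 4) ℝ, J * (K * X) = X := by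
    intro X; rw [← mul_assoc, hJK, one_mul]
  have L1 : ∀ (M : Matrix (Fin 4) (Fin 4) ℝ) (t : Fin 4 → ℝ),
      J.mulVec ((K * (M * K.transpose)).mulVec (fun μ => ∑ l, J l μ * t l)) = M.mulVec t := by
    intro M t
    have : (fun μ => ∑ l, J l μ * t l) = J.transpose.mulVec t := rfl
    rw [this, Matrix.mulVec_mulVec, Matrix.mulVec_mulVec]
    congr 1
    rw [r2, mul_assoc, hT, mul_one]
  have L2 : ∀ N : Fin 4 → Matrix (Fin 4) (Fin 4) ℝ,
      J.mulVec (dvg (fun μ => K * ((∑ l, J l μ • N l) * K.transpose))) = dvg N := by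
    intro N
    ext κ
    have h1 : J.mulVec (dvg (fun μ => K * ((∑ l, J l μ • N l) * K.transpose))) κ
        = ∑ μ, ((J * (K * ((∑ l, J l μ • N l) * K.transpose))) κ μ) := by
      simp only [Matrix.mulVec, dotProduct, dvg, Finset.mul_sum]
      rw [Finset.sum_comm]
      exact Finset.sum_congr rfl fun μ _ => Matrix.mul_apply.symm
    rw [h1]
    simp only [r2, Finset.sum_mul, Matrix.sum_apply, Matrix.smul_mul, Matrix.smul_apply,
      smul_eq_mul]
    rw [Finset.sum_comm]
    refine Finset.sum_congr rfl fun l _ => ?_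
    have : ∑ μ, J l μ * (N l * K.transpose) κ μ
        = (N l * K.transpose * J.transpose) κ l := by
      rw [Matrix.mul_apply]
      exact Finset.sum_congr rfl fun μ _ => by rw [Matrix.transpose_apply, mul_comm]
    rw [this, mul_assoc, hT, mul_one]
  have tr : ∀ (X : Matrix (Fin 4) (Fin 4) ℝ) (R : Fin 4 → Matrix (Fin 4) (Fin 4) ℝ) (μ : Fin 4),
      (J.transpose * (∑ l, J l μ • R l) * J * (K * X * K.transpose)).trace
        = ∑ l, J l μ * (R l * X).trace := by
    intro X R μ
    rw [show J.transpose * (∑ l, J l μ • R l) * J * (K * X * K.transpose)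
      = J.transpose * ((∑ l, J l μ • R l) * (J * K) * X * K.transpose) by noncomm_ring,
      Matrix.trace_mul_comm, hJK, mul_one, mul_assoc, hT, mul_one]
    simp [Finset.sum_mul, Matrix.trace_sum]
  have W : K * G * K.transpose * (J.transpose * v * J) * (K * G * K.transpose)
      = K * (G * v * G) * K.transpose := by
    simp only [mul_assoc, r1, r2]
  have u2 : ∀ μ, K * (G * v * G) * K.transpose * (J.transpose * (∑ l, J l μ • P l) * J)
      * (K * G * K.transpose)
      = K * ((∑ l, J l μ • (G * v * G * P l * G)) * K.transpose) := by
    intro μ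
    have : ∑ l, J l μ • (G * v * G * P l * G) = G * v * G * (∑ l, J l μ • P l) * G := by
      simp [Finset.mul_sum, Finset.sum_mul]
    rw [this]
    simp only [mul_assoc, r1, r2]
  have u4 : ∀ μ, K * G * K.transpose * (J.transpose * (∑ l, J l μ • Q l) * J)
      * (K * G * K.transpose)
      = K * ((∑ l, J l μ • (G * Q l * G)) * K.transpose) := by
    intro μ
    have : ∑ l, J l μ • (G * Q l * G) = G * (∑ l, J l μ • Q l) * G := by
      simp [Finset.mul_sum, Finset.sum_mul]
    rw [this]
    simp only [mul_assoc, r1, r2]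
  have tr' : ∀ (R : Fin 4 → Matrix (Fin 4) (Fin 4) ℝ) (μ : Fin 4),
      (K * G * K.transpose * (J.transpose * (∑ l, J l μ • R l) * J)).trace
        = ∑ l, J l μ * (G * R l).trace := by
    intro R μ
    rw [Matrix.trace_mul_comm, tr]
    exact Finset.sum_congr rfl fun l _ => by rw [Matrix.trace_mul_comm]
  have a1 : ∀ X : Matrix (Fin 4) (Fin 4) ℝ, K * X * K.transpose = K * (X * K.transpose) :=
    fun X => mul_assoc _ _ _
  simp only [Fcur, W, u2, u4, tr, tr', Matrix.mulVec_add, Matrix.mulVec_sub, Matrix.mulVec_smul]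
  simp only [a1, L1, L2]

theorem sum_sandwich (M v N : Matrix (Fin 4) (Fin 4) ℝ) (a b : Fin 4) :
    ∑ α, ∑ β, M a α * v α β * N β b = (M * v * N) a b := by
  simp only [Matrix.mul_apply, Finset.sum_mul]
  rw [Finset.sum_comm]

theorem contr_fix (G v P : Matrix (Fin 4) (Fin 4) ℝ) (hG : G.IsSymm) (hv : v.IsSymm)
    (hP : P.IsSymm) (κ μ : Fin 4) :
    ∑ α, ∑ β, ((∑ ξ, ∑ η,
      (-(1 / 2 : ℝ) * G α ξ * G β μ * G κ η
        + (1 / 2 : ℝ) * G α μ * G β ξ * G κ η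
        - (1 / 2 : ℝ) * G α ξ * G β κ * G μ η
        - (1 / 2 : ℝ) * G α κ * G β ξ * G μ η
        + (1 / 2 : ℝ) * G α ξ * G β η * G κ μ
        + G α κ * G β μ * G ξ η
        - (1 / 2 : ℝ) * G α β * G κ μ * G ξ η) * P ξ η)
      - ((1 / 2 : ℝ) * ∑ ν, ∑ ρ, G ν ρ * P ν ρ) *
        ((1 / 2 : ℝ) * (G α κ * G β μ + G α μ * G β κ) - G α β * G κ μ)) * v α β
    = (1 / 2 : ℝ) * (G κ μ * (P * (G * v * G)).trace) - (G * v * G * P * G) κ μ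
      + (1 / 2 : ℝ) * ((G * v * G) κ μ * (G * P).trace) := by
  have gs : ∀ a b, G a b = G b a := fun a b => hG.apply b a
  have vs : ∀ a b, v a b = v b a := fun a b => hv.apply b a
  have ps : ∀ a b, P a b = P b a := fun a b => hP.apply b a
  set Z := G * P * G with hZ
  have hZs : Z.IsSymm := by
    simp [hZ, Matrix.IsSymm, Matrix.transpose_mul, hG.eq, hP.eq, mul_assoc]
  have zs : ∀ a b, Z a b = Z b a := fun a b => hZs.apply b a
  have ht : ∑ ξ, ∑ η, G ξ η * P ξ η = (G * P).trace := by
    simp only [Matrix.trace, Matrix.diag_apply, Matrix.mul_apply]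
    exact Finset.sum_congr rfl fun a _ => Finset.sum_congr rfl fun b _ => by rw [ps a b]
  have hz : ∀ a b, ∑ ξ, ∑ η, G a ξ * P ξ η * G b η = Z a b := by
    intro a b
    rw [hZ, ← sum_sandwich]
    exact Finset.sum_congr rfl fun c _ => Finset.sum_congr rfl fun d _ => by rw [gs b d]
  set t := (G * P).trace with htd
  have inner : ∀ α β, ∑ ξ, ∑ η,
      (-(1 / 2 : ℝ) * G α ξ * G β μ * G κ η
        + (1 / 2 : ℝ) * G α μ * G β ξ * G κ η
        - (1 / 2 : ℝ) * G α ξ * G β κ * G μ η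
        - (1 / 2 : ℝ) * G α κ * G β ξ * G μ η
        + (1 / 2 : ℝ) * G α ξ * G β η * G κ μ
        + G α κ * G β μ * G ξ η
        - (1 / 2 : ℝ) * G α β * G κ μ * G ξ η) * P ξ η
      = -(1 / 2) * Z α κ * G β μ + (1 / 2) * Z β κ * G α μ - (1 / 2) * Z α μ * G β κ
        - (1 / 2) * Z β μ * G α κ + (1 / 2) * Z α β * G κ μ + t * G α κ * G β μ
        - (1 / 2) * t * G α β * G κ μ := by
    intro α β
    rw [← ht, ← hz α κ, ← hz β κ, ← hz α μ, ← hz β μ, ← hz α β]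
    simp only [Finset.mul_sum, Finset.sum_mul, ← Finset.sum_add_distrib,
      ← Finset.sum_sub_distrib]
    exact Finset.sum_congr rfl fun c _ => Finset.sum_congr rfl fun d _ => by ring
  simp only [inner, ht]
  have s : ∀ (M N : Matrix (Fin 4) (Fin 4) ℝ), (∀ a b, M a b = M b a) → ∀ a b,
      ∑ α, ∑ β, M α a * N β b * v α β = (M * v * N) a b := by
    intro M N hM a b
    rw [← sum_sandwich]
    exact Finset.sum_congr rfl fun c _ => Finset.sum_congr rfl fun d _ => by rw [hM c a]; ring
  have s' : ∀ (M N : Matrix (Fin 4) (Fin 4) ℝ), (∀ a b, M a b = M b a) → ∀ a b,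
      ∑ α, ∑ β, M β a * N α b * v α β = (M * v * N) a b := by
    intro M N hM a b
    rw [← s M N hM, Finset.sum_comm]
    exact Finset.sum_congr rfl fun c _ => Finset.sum_congr rfl fun d _ => by rw [vs d c]
  have sZ : ∑ α, ∑ β, Z α β * v α β = (P * (G * v * G)).trace := by
    have : (P * (G * v * G)).trace = (Z * v).trace := by
      rw [hZ, show P * (G * v * G) = (P * G * v) * G by noncomm_ring, Matrix.trace_mul_comm]
      congr 1; noncomm_ring
    rw [this]
    simp only [Matrix.trace, Matrix.diag_apply, Matrix.mul_apply]
    exact Finset.sum_congr rfl fun a _ => Finset.sum_congr rfl fun b _ => by rw [vs a b]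
  have tZ : (Z * v * G) μ κ = (G * v * G * P * G) κ μ := by
    have : (Z * v * G).transpose = G * v * G * P * G := by
      simp [Matrix.transpose_mul, hP.eq, hG.eq, hv.eq, hZ, mul_assoc]
    rw [← this, Matrix.transpose_apply]
  have key : ∑ α, ∑ β, ((-(1 / 2) * Z α κ * G β μ + (1 / 2) * Z β κ * G α μ
        - (1 / 2) * Z α μ * G β κ
        - (1 / 2) * Z β μ * G α κ + (1 / 2) * Z α β * G κ μ + t * G α κ * G β μ
        - (1 / 2) * t * G α β * G κ μ)
        - (1 / 2) * t * ((1 / 2 : ℝ) * (G α κ * G β μ + G α μ * G β κ) - G α β * G κ μ)) * v α β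
      = -(1 / 2) * (∑ α, ∑ β, Z α κ * G β μ * v α β)
        + (1 / 2) * (∑ α, ∑ β, Z β κ * G α μ * v α β)
        - (1 / 2) * (∑ α, ∑ β, Z α μ * G β κ * v α β)
        - (1 / 2) * (∑ α, ∑ β, Z β μ * G α κ * v α β)
        + (1 / 2) * G κ μ * (∑ α, ∑ β, Z α β * v α β)
        + (3 / 4) * t * (∑ α, ∑ β, G α κ * G β μ * v α β)
        - (1 / 4) * t * (∑ α, ∑ β, G β κ * G α μ * v α β) := by
    simp only [Finset.mul_sum, ← Finset.sum_add_distrib, ← Finset.sum_sub_distrib]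
    exact Finset.sum_congr rfl fun c _ => Finset.sum_congr rfl fun d _ => by ring
  rw [key, s Z G zs, s' Z G zs, s Z G zs, s' Z G zs, s G G gs, s' G G gs, sZ, tZ]
  ring

theorem contr_D (G Q : Matrix (Fin 4) (Fin 4) ℝ) (hG : G.IsSymm) (hQ : Q.IsSymm)
    (κ μ : Fin 4) :
    ∑ α, ∑ β, ((1 / 2 : ℝ) * (G α κ * G β μ + G α μ * G β κ) - G α β * G κ μ) * Q α β
      = (G * Q * G) κ μ - G κ μ * (G * Q).trace := by
  have e1 : ∑ α, ∑ β, G α κ * G β μ * Q α β = (G * Q * G) κ μ := by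
    rw [← sum_sandwich]
    exact Finset.sum_congr rfl fun c _ => Finset.sum_congr rfl fun d _ => by
      rw [hG.apply κ c]; ring
  have e2 : ∑ α, ∑ β, G α μ * G β κ * Q α β = (G * Q * G) κ μ := by
    rw [← e1, Finset.sum_comm]
    exact Finset.sum_congr rfl fun c _ => Finset.sum_congr rfl fun d _ => by
      rw [hQ.apply c d]; ring
  have e3 : ∑ α, ∑ β, G α β * Q α β = (G * Q).trace := by
    simp only [Matrix.trace, Matrix.diag_apply, Matrix.mul_apply]
    exact Finset.sum_congr rfl fun a _ => Finset.sum_congr rfl fun b _ => by rw [hQ.apply b a]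
  have e4 : (G * Q * G) κ μ = (1 / 2) * (G * Q * G) κ μ + (1 / 2) * (G * Q * G) κ μ := by ring
  rw [e4]
  nth_rw 1 [← e1]
  rw [← e2, ← e3]
  simp only [Finset.mul_sum, ← Finset.sum_add_distrib, ← Finset.sum_sub_distrib]
  exact Finset.sum_congr rfl fun c _ => Finset.sum_congr rfl fun d _ => by ring

theorem Icur_eq (g v : (Fin 4 → ℝ) → Matrix (Fin 4) (Fin 4) ℝ) (x : Fin 4 → ℝ)
    (hg : ∀ x, (g x).IsSymm) (hv : ∀ x, (v x).IsSymm) :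
    Icur g v x = Fcur (g x)⁻¹ (v x) (fun μ => Matrix.of fun a b => pd μ (fun x' => g x' a b) x)
      (fun μ => Matrix.of fun a b => pd μ (fun x' => v x' a b) x) := by
  have hG : ((g x)⁻¹).IsSymm := by
    rw [Matrix.IsSymm, Matrix.transpose_nonsing_inv, (hg x).eq]
  have sy : ∀ w : (Fin 4 → ℝ) → Matrix (Fin 4) (Fin 4) ℝ, (∀ x, (w x).IsSymm) → ∀ μ,
      (Matrix.of fun a b => pd μ (fun x' => w x' a b) x).IsSymm := by
    intro w hw μ
    ext a b
    simp only [Matrix.transpose_apply, Matrix.of_apply]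
    congr 1
    ext x'
    exact (hw x').apply a b
  ext κ
  have h1 : Icur g v x κ = ∑ μ, (∑ α, ∑ β, ((∑ ξ, ∑ η,
      Cco g x κ α β μ ξ η * pd μ (fun x' => g x' ξ η) x)
      - Gam g x μ * Dco g x κ μ α β) * v x α β)
      + ∑ μ, ∑ α, ∑ β, Dco g x κ μ α β * pd μ (fun x' => v x' α β) x := by
    unfold Icur
    congr 1
    simp only [← Finset.sum_sub_distrib, Finset.sum_mul]
    symm
    rw [Finset.sum_comm]
    refine Finset.sum_congr rfl fun α _ => ?_
    rw [Finset.sum_comm]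
  have h2 : ∀ μ, ∑ α, ∑ β, Dco g x κ μ α β * pd μ (fun x' => v x' α β) x
      = ((g x)⁻¹ * (Matrix.of fun a b => pd μ (fun x' => v x' a b) x) * (g x)⁻¹) κ μ
        - (g x)⁻¹ κ μ * ((g x)⁻¹ * (Matrix.of fun a b => pd μ (fun x' => v x' a b) x)).trace := by
    intro μ
    exact contr_D (g x)⁻¹ _ hG (sy v hv μ) κ μ
  rw [h1]
  simp only [h2]
  have h3 := fun μ => contr_fix (g x)⁻¹ (v x)
    (Matrix.of fun a b => pd μ (fun x' => g x' a b) x) hG (hv x) (sy g hg μ) κ μ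
  simp only [Matrix.of_apply] at h3
  simp only [Cco, Dco, Gam, h3]
  simp only [Fcur, dvg, Matrix.mulVec, dotProduct, Pi.add_apply, Pi.sub_apply, Pi.smul_apply,
    smul_eq_mul, Finset.mul_sum, ← Finset.sum_add_distrib, ← Finset.sum_sub_distrib]
  exact Finset.sum_congr rfl fun c _ => by ring

theorem jac_smooth (y : (Fin 4 → ℝ) → (Fin 4 → ℝ)) (hy : ContDiff ℝ (⊤ : ℕ∞) y) (l k : Fin 4) :
    ContDiff ℝ (⊤ : ℕ∞) fun x => jac y x l k := by
  have h : ContDiff ℝ (⊤ : ℕ∞) fun x => y x l := contDiff_pi.1 hy l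
  simp only [jac, pd, Matrix.of_apply]
  exact (h.fderiv_right (m := (⊤ : ℕ∞)) (by simp)).clm_apply contDiff_const

theorem jac_symm (y : (Fin 4 → ℝ) → (Fin 4 → ℝ)) (hy : ContDiff ℝ (⊤ : ℕ∞) y)
    (x : Fin 4 → ℝ) (l j k : Fin 4) :
    pd j (fun x' => jac y x' l k) x = pd k (fun x' => jac y x' l j) x := by
  have h : ContDiff ℝ (⊤ : ℕ∞) fun x => y x l := contDiff_pi.1 hy l
  have hd : DifferentiableAt ℝ (fderiv ℝ fun x => y x l) x :=
    ((h.fderiv_right (m := (⊤ : ℕ∞)) (by simp)).differentiable (by simp)) x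
  have hs : IsSymmSndFDerivAt ℝ (fun x => y x l) x :=
    h.contDiffAt.isSymmSndFDerivAt (by
      simp only [minSmoothness_of_isRCLikeNormedField]; exact WithTop.coe_le_coe.2 (le_top : (2 : ℕ∞) ≤ ⊤))
  have e : ∀ j k : Fin 4, pd j (fun x' => jac y x' l k) x
      = fderiv ℝ (fderiv ℝ fun x => y x l) x (Pi.single j 1) (Pi.single k 1) := by
    intro j k
    simp only [jac, pd, Matrix.of_apply]
    rw [fderiv_clm_apply hd (differentiableAt_const _)]
    simp
  rw [e, e]
  exact hs _ _

theorem pd_comp (y : (Fin 4 → ℝ) → (Fin 4 → ℝ)) (hy : Differentiable ℝ y)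
    (f : (Fin 4 → ℝ) → ℝ) (hf : Differentiable ℝ f) (x : Fin 4 → ℝ) (μ : Fin 4) :
    pd μ (fun x' => f (y x')) x = ∑ l, jac y x l μ * pd l f (y x) := by
  have h1 : fderiv ℝ (fun x' => f (y x')) x = (fderiv ℝ f (y x)).comp (fderiv ℝ y x) :=
    fderiv_comp x (hf _) (hy _)
  have h2 : ∀ l, jac y x l μ = fderiv ℝ y x (Pi.single μ 1) l := by
    intro l
    simp only [jac, pd, Matrix.of_apply]
    rw [fderiv_apply (hy x)]
    rfl
  rw [pd, h1, ContinuousLinearMap.comp_apply]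
  simp only [h2, pd]
  conv_lhs => rw [pi_eq_sum_univ' (fderiv ℝ y x (Pi.single μ 1))]
  rw [map_sum]
  refine Finset.sum_congr rfl fun l _ => ?_
  rw [map_smul, smul_eq_mul]

theorem pd_pullback (y : (Fin 4 → ℝ) → (Fin 4 → ℝ)) (hy : ContDiff ℝ (⊤ : ℕ∞) y)
    (gx gy : (Fin 4 → ℝ) → Matrix (Fin 4) (Fin 4) ℝ)
    (hgy : ∀ α β, ContDiff ℝ (⊤ : ℕ∞) fun z => gy z α β)
    (hgrel : ∀ (x : Fin 4 → ℝ) (α β : Fin 4),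
      gx x α β = ∑ μ : Fin 4, ∑ ν : Fin 4, jac y x μ α * jac y x ν β * gy (y x) μ ν)
    (x : Fin 4 → ℝ) (μ : Fin 4) :
    (Matrix.of fun a b => pd μ (fun x' => gx x' a b) x)
      = (Matrix.of fun l k => pd μ (fun x' => jac y x' l k) x).transpose * gy (y x) * jac y x
        + (jac y x).transpose * gy (y x) * (Matrix.of fun l k => pd μ (fun x' => jac y x' l k) x)
        + (jac y x).transpose
          * (∑ l, jac y x l μ • Matrix.of fun a b => pd l (fun z => gy z a b) (y x))
          * jac y x := by
  have hyd : Differentiable ℝ y := hy.differentiable (by simp)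
  have hgd : ∀ a b, Differentiable ℝ fun z => gy z a b := fun a b =>
    (hgy a b).differentiable (by simp)
  have hJ : ∀ l k, DifferentiableAt ℝ (fun x => jac y x l k) x := fun l k =>
    (jac_smooth y hy l k).differentiable (by simp) x
  have hgc : ∀ a b, DifferentiableAt ℝ (fun x => gy (y x) a b) x := fun a b =>
    ((hgd a b).comp hyd) x
  ext α β
  simp only [Matrix.add_apply, ← sum_sandwich]
  simp only [Matrix.of_apply, hgrel, Matrix.transpose_apply, Matrix.sum_apply, Matrix.smul_apply,
    smul_eq_mul]
  have hc := fun a b => pd_comp y hyd _ (hgd a b) x μ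
  simp only [← hc]
  simp only [pd]
  have h0 : ∀ a b, DifferentiableAt ℝ
      (fun x' => jac y x' a α * jac y x' b β * gy (y x') a b) x := fun a b =>
    ((hJ _ _).mul (hJ _ _)).mul (hgc _ _)
  rw [fderiv_fun_sum fun a _ => DifferentiableAt.fun_sum fun b _ => h0 a b]
  simp only [_root_.sum_apply, ← Finset.sum_add_distrib]
  refine Finset.sum_congr rfl fun a _ => ?_
  rw [fderiv_fun_sum fun b _ => h0 a b]
  simp only [_root_.sum_apply]
  refine Finset.sum_congr rfl fun b _ => ?_
  rw [fderiv_fun_mul ((hJ a α).fun_mul (hJ b β)) (hgc a b), fderiv_fun_mul (hJ a α) (hJ b β)]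
  simp only [_root_.add_apply, _root_.smul_apply, smul_eq_mul]
  ring

/-- Proposition of Appendix B, equation (B2): the metric part `I`
of the Noether current transforms as a (1,0)-tensor under a change of coordinates,
even though its individual summands do not. -/
theorem Icur_is_vector
    (y yinv : (Fin 4 → ℝ) → (Fin 4 → ℝ))
    (hy : ContDiff ℝ (⊤ : ℕ∞) y) (hyinv : ContDiff ℝ (⊤ : ℕ∞) yinv)
    (hleft : Function.LeftInverse yinv y) (hright : Function.RightInverse yinv y)
    (gx gy vx vy : (Fin 4 → ℝ) → Matrix (Fin 4) (Fin 4) ℝ)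
    (hgx : ∀ α β, ContDiff ℝ (⊤ : ℕ∞) fun x => gx x α β)
    (hgy : ∀ α β, ContDiff ℝ (⊤ : ℕ∞) fun z => gy z α β)
    (hvx : ∀ α β, ContDiff ℝ (⊤ : ℕ∞) fun x => vx x α β)
    (hvy : ∀ α β, ContDiff ℝ (⊤ : ℕ∞) fun z => vy z α β)
    (hgxsymm : ∀ x, (gx x).IsSymm) (hgysymm : ∀ z, (gy z).IsSymm)
    (hgxdet : ∀ x, IsUnit (gx x).det) (hgydet : ∀ z, IsUnit (gy z).det)
    (hvxsymm : ∀ x, (vx x).IsSymm) (hvysymm : ∀ z, (vy z).IsSymm)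
    (hgrel : ∀ (x : Fin 4 → ℝ) (α β : Fin 4),
      gx x α β = ∑ μ : Fin 4, ∑ ν : Fin 4, jac y x μ α * jac y x ν β * gy (y x) μ ν)
    (hvrel : ∀ (x : Fin 4 → ℝ) (α β : Fin 4),
      vx x α β = ∑ μ : Fin 4, ∑ ν : Fin 4, jac y x μ α * jac y x ν β * vy (y x) μ ν) :
    ∀ (x : Fin 4 → ℝ) (lam : Fin 4),
      Icur gy vy (y x) lam = ∑ κ : Fin 4, jac y x lam κ * Icur gx vx x κ := by
  intro x lam
  have hmat : ∀ (wx wy : (Fin 4 → ℝ) → Matrix (Fin 4) (Fin 4) ℝ),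
      (∀ (x : Fin 4 → ℝ) (α β : Fin 4), wx x α β
        = ∑ μ : Fin 4, ∑ ν : Fin 4, jac y x μ α * jac y x ν β * wy (y x) μ ν) →
      wx x = (jac y x).transpose * wy (y x) * jac y x := by
    intro wx wy h
    ext α β
    rw [h, ← sum_sandwich]
    exact Finset.sum_congr rfl fun c _ => Finset.sum_congr rfl fun d _ => by
      rw [Matrix.transpose_apply]; ring
  have hg := hmat gx gy hgrel
  have hv := hmat vx vy hvrel
  rw [Icur_eq gy vy (y x) hgysymm hvysymm]
  have hI := Icur_eq gx vx x hgxsymm hvxsymm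
  have hP := pd_pullback y hy gx gy hgy hgrel x
  have hQ := pd_pullback y hy vx vy hvy hvrel x
  have hH := jac_symm y hy x
  have hdet : IsUnit (jac y x).det := by
    have := hgxdet x
    rw [hg, Matrix.det_mul] at this
    exact isUnit_of_mul_isUnit_right this
  change _ = (jac y x).mulVec (Icur gx vx x) lam
  rw [hI]
  simp only [hP, hQ]
  rw [hg, hv]
  set J := jac y x with hJ
  set H : Fin 4 → Matrix (Fin 4) (Fin 4) ℝ :=
    fun μ => Matrix.of fun l k => pd μ (fun x' => jac y x' l k) x with hHd
  have hHs : ∀ j l k, H j l k = H k l j := fun j l k => hH l j k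
  set K := J⁻¹ with hK
  have hJK : J * K = 1 := Matrix.mul_nonsing_inv _ hdet
  have hKJ : K * J = 1 := Matrix.nonsing_inv_mul _ hdet
  have hT : J.transpose * K.transpose = 1 := by
    rw [← Matrix.transpose_mul, hKJ, Matrix.transpose_one]
  set A : Fin 4 → Matrix (Fin 4) (Fin 4) ℝ := fun l => (∑ m, K m l • H m) * K with hA
  have hAs : ∀ a b c, A a b c = A c b a := by
    intro a b c
    simp only [hA, Matrix.mul_apply, Matrix.sum_apply, Matrix.smul_apply, smul_eq_mul,
      Finset.sum_mul]
    rw [Finset.sum_comm]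
    exact Finset.sum_congr rfl fun i _ => Finset.sum_congr rfl fun j _ => by
      rw [hHs j b i]; ring
  have hHA : ∀ μ, H μ = (∑ l, J l μ • A l) * J := by
    intro μ
    have : ∑ l, J l μ • A l = H μ * K := by
      simp only [hA, ← Matrix.smul_mul, ← Finset.sum_mul, Finset.smul_sum, smul_smul]
      rw [Finset.sum_comm]
      congr 1
      simp only [← Finset.sum_smul]
      have e : ∀ m, ∑ l, J l μ * K m l = (1 : Matrix (Fin 4) (Fin 4) ℝ) m μ := by
        intro m
        rw [← hKJ, Matrix.mul_apply]
        exact Finset.sum_congr rfl fun i _ => mul_comm _ _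
      simp [e, Matrix.one_apply]
    rw [this, mul_assoc, hKJ, mul_one]
  have comb : ∀ (w : Matrix (Fin 4) (Fin 4) ℝ) (R : Fin 4 → Matrix (Fin 4) (Fin 4) ℝ) (μ : Fin 4),
      (H μ).transpose * w * J + J.transpose * w * H μ + J.transpose * (∑ l, J l μ • R l) * J
      = J.transpose
        * (∑ l, J l μ • (R + fun l => (A l).transpose * w + w * A l) l) * J := by
    intro w R μ
    have : ∑ l, J l μ • (R + fun l => (A l).transpose * w + w * A l) l
        = (∑ l, J l μ • R l) + ((∑ l, J l μ • A l).transpose * w + w * ∑ l, J l μ • A l) := by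
      simp only [Pi.add_apply, smul_add, Finset.sum_add_distrib, Matrix.transpose_sum,
        Matrix.transpose_smul, Finset.sum_mul, Finset.mul_sum, Matrix.smul_mul, Matrix.mul_smul]
    rw [this, hHA μ]
    generalize ∑ l, J l μ • A l = B
    rw [Matrix.transpose_mul]
    noncomm_ring
  have hinv : (J.transpose * gy (y x) * J)⁻¹ = K * (gy (y x))⁻¹ * K.transpose := by
    rw [Matrix.mul_inv_rev, Matrix.mul_inv_rev, ← Matrix.transpose_nonsing_inv, mul_assoc]
  have hc1 := comb (gy (y x)) (fun l => Matrix.of fun a b => pd l (fun z => gy z a b) (y x))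
  have hc2 := comb (vy (y x)) (fun l => Matrix.of fun a b => pd l (fun z => vy z a b) (y x))
  have hGs : ((gy (y x))⁻¹).IsSymm := by
    rw [Matrix.IsSymm, Matrix.transpose_nonsing_inv, (hgysymm _).eq]
  have e1 := funext hc1
  have e2 := funext hc2
  simp only [hHd] at e1 e2
  rw [e1, e2, hinv, Fcur_lin J K _ _ hJK, Fcur_add,
    Fcur_gauge _ _ _ (Matrix.mul_nonsing_inv _ (hgydet _)) (Matrix.nonsing_inv_mul _ (hgydet _))
      hGs (hvysymm _) A hAs, add_zero]
end
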